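/- arXiv:2511.08879 — 3 statements merged into one kernel-verified Lean document; each statement's English description precedes it below -/
import Mathlib

section
/- Let n ≥ 2 and let μ = (μ₁,…,μₙ) ∈ ℤⁿ be weakly decreasing. Then 1 < depth(μ) < 2 holds if and only if there exists an integer k such that either μ − k·(1,…,1) or μ* − k·(1,…,1) equals one of the following vectors in ℤⁿ: (2,0,…,0,−1) (allowed for every n ≥ 2); (2,0,…,0) (only for n ≥ 3); (1,1,0,…,0,−1) (only for n ≥ 3); (1,1,0,…,0) (only for n ≥ 5); (2,1,0,0,0) (only for n = 5); (1,1,1,0,…,0) (only for n ∈ {6,7,8}). Here μ* := (−μₙ, −μₙ₋₁, …, −μ₁) denotes the weakly decreasing rearrangement of (−μ₁,…,−μₙ). -/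
/-- Sum of the first `j` entries of a vector indexed by `Fin n`. -/
def psum {n : ℕ} (μ : Fin n → ℤ) (j : ℕ) : ℤ :=
  ∑ i ∈ Finset.univ.filter (fun i : Fin n => (i : ℕ) < j), μ i

/-- The depth of a weakly decreasing vector `μ ∈ ℤⁿ`, viewed as a dominant
cocharacter of `GL_n`:  `max_{1 ≤ j ≤ n-1} (μ₁+⋯+μⱼ) − (j/n)(μ₁+⋯+μₙ)`. -/
def depth {n : ℕ} (μ : Fin n → ℤ) : ℚ :=
  if h : (Finset.Icc 1 (n - 1)).Nonempty then
    (Finset.Icc 1 (n - 1)).sup' h fun j : ℕ =>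
      (psum μ j : ℚ) - (j : ℚ) / (n : ℚ) * (psum μ n : ℚ)
  else 0

/-- `μ* := (−μₙ, −μₙ₋₁, …, −μ₁)`, the weakly decreasing rearrangement of `−μ`. -/
def dualVec {n : ℕ} (μ : Fin n → ℤ) : Fin n → ℤ := fun i => - μ i.rev

lemma psum_zero' {n : ℕ} (μ : Fin n → ℤ) : psum μ 0 = 0 := by simp [psum]

lemma psum_succ' {n : ℕ} (μ : Fin n → ℤ) (j : ℕ) (h : j < n) :
    psum μ (j+1) = psum μ j + μ ⟨j, h⟩ := by
  unfold psum
  have : (Finset.univ.filter (fun i : Fin n => (i : ℕ) < j+1)) =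
      insert ⟨j, h⟩ (Finset.univ.filter (fun i : Fin n => (i : ℕ) < j)) := by
    ext i
    simp only [Finset.mem_filter, Finset.mem_univ, true_and, Finset.mem_insert, Fin.ext_iff]
    omega
  rw [this, Finset.sum_insert (by simp)]
  ring

lemma psum_lower {n : ℕ} (μ : Fin n → ℤ) (c : ℚ) (a b : ℕ) (hab : a ≤ b) (hb : b ≤ n)
    (h : ∀ i : Fin n, a ≤ (i : ℕ) → (i : ℕ) < b → c ≤ μ i) :
    ((b : ℚ) - a) * c ≤ psum μ b - psum μ a := by
  induction b, hab using Nat.le_induction with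
  | base => simp
  | succ b hab ih =>
    have h1 := ih (by omega) (fun i h1 h2 => h i h1 (by omega))
    have h2 := h ⟨b, by omega⟩ hab (by simp)
    rw [psum_succ' μ b (by omega)]
    push_cast
    linarith

lemma psum_upper {n : ℕ} (μ : Fin n → ℤ) (c : ℚ) (a b : ℕ) (hab : a ≤ b) (hb : b ≤ n)
    (h : ∀ i : Fin n, a ≤ (i : ℕ) → (i : ℕ) < b → (μ i : ℚ) ≤ c) :
    (psum μ b : ℚ) - psum μ a ≤ ((b : ℚ) - a) * c := by
  induction b, hab using Nat.le_induction with
  | base => simp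
  | succ b hab ih =>
    have h1 := ih (by omega) (fun i h1 h2 => h i h1 (by omega))
    have h2 := h ⟨b, by omega⟩ hab (by simp)
    rw [psum_succ' μ b (by omega)]
    push_cast
    linarith

lemma depth_eq {n : ℕ} (μ : Fin n → ℤ) (p : ℕ) (hp : 1 ≤ p) (hpn : p < n)
    (h1 : ∀ i : Fin n, (i : ℕ) < p → (psum μ n : ℚ) / n ≤ μ i)
    (h2 : ∀ i : Fin n, p ≤ (i : ℕ) → (μ i : ℚ) ≤ (psum μ n : ℚ) / n) :
    depth μ = (psum μ p : ℚ) - (p : ℚ) / (n : ℚ) * (psum μ n : ℚ) := by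
  have hne : (Finset.Icc 1 (n - 1)).Nonempty := ⟨p, by simp; omega⟩
  unfold depth
  rw [dif_pos hne]
  apply le_antisymm
  · apply Finset.sup'_le
    intro j hj
    simp only [Finset.mem_Icc] at hj
    have e : ∀ x : ℚ, x / (n : ℚ) * (psum μ n : ℚ) = x * ((psum μ n : ℚ) / n) := by
      intro x; ring
    rw [e, e]
    rcases le_total j p with h | h
    · have := psum_lower μ _ j p h (by omega) (fun i _ hi => h1 i hi)
      linarith
    · have := psum_upper μ _ p j h (by omega) (fun i hi _ => h2 i hi)
      linarith
  · exact Finset.le_sup' (fun j : ℕ => (psum μ j : ℚ) - (j : ℚ) / (n : ℚ) * (psum μ n : ℚ))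
      (by simp; omega)

/-- `μ = k + (1^p, 0^(n-p)) + ε e_1 - η e_n`. -/
def HasForm {n : ℕ} (μ : Fin n → ℤ) (k : ℤ) (p : ℕ) (ε η : ℤ) : Prop :=
  1 ≤ p ∧ p < n ∧ (ε = 0 ∨ ε = 1) ∧ (η = 0 ∨ η = 1) ∧
  ∀ i : Fin n, μ i = k + (if (i : ℕ) < p then 1 else 0) + (if (i : ℕ) = 0 then ε else 0)
    - (if (i : ℕ) = n - 1 then η else 0)

lemma HasForm.dual {n : ℕ} {μ : Fin n → ℤ} {k : ℤ} {p : ℕ} {ε η : ℤ}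
    (h : HasForm μ k p ε η) : HasForm (dualVec μ) (-k-1) (n-p) η ε := by
  obtain ⟨h1, h2, h3, h4, h5⟩ := h
  refine ⟨by omega, by omega, h4, h3, fun i => ?_⟩
  have hi := i.isLt
  simp only [dualVec, h5, Fin.val_rev]
  split_ifs <;> omega

lemma dualVec_dualVec {n : ℕ} (μ : Fin n → ℤ) : dualVec (dualVec μ) = μ := by
  funext i; simp [dualVec]

lemma HasForm.shift {n : ℕ} {μ : Fin n → ℤ} {k c : ℤ} {p : ℕ} {ε η : ℤ}
    (h : HasForm (fun i => μ i - c) k p ε η) : HasForm μ (k+c) p ε η := by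
  obtain ⟨h1, h2, h3, h4, h5⟩ := h
  refine ⟨h1, h2, h3, h4, fun i => ?_⟩
  have := h5 i
  simp only at this
  linarith

lemma HasForm.psums {n : ℕ} {μ : Fin n → ℤ} {k : ℤ} {p : ℕ} {ε η : ℤ}
    (h : HasForm μ k p ε η) :
    (psum μ p : ℚ) = p * (k + 1) + ε ∧ (psum μ n : ℚ) = n * k + p + ε - η := by
  obtain ⟨h1, h2, h3, h4, h5⟩ := h
  have hA : psum μ 1 = k + 1 + ε := by
    rw [psum_succ' μ 0 (by omega), psum_zero', h5]
    have : ¬ (0 = n - 1) := by omega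
    simp [this]; omega
  have hB : (psum μ p : ℚ) - psum μ 1 = ((p : ℚ) - (1 : ℕ)) * (k + 1) := by
    have hv : ∀ i : Fin n, 1 ≤ (i : ℕ) → (i : ℕ) < p → (μ i : ℚ) = k + 1 := by
      intro i hi hi'
      have : μ i = k + 1 := by
        rw [h5]; split_ifs <;> omega
      rw [this]; push_cast; ring
    exact le_antisymm (psum_upper μ _ 1 p h1 h2.le fun i a b => (hv i a b).le)
      (psum_lower μ _ 1 p h1 h2.le fun i a b => (hv i a b).ge)
  have hC : (psum μ (n-1) : ℚ) - psum μ p = (((n-1 : ℕ) : ℚ) - p) * k := by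
    have hv : ∀ i : Fin n, p ≤ (i : ℕ) → (i : ℕ) < n - 1 → (μ i : ℚ) = k := by
      intro i hi hi'
      have : μ i = k := by
        rw [h5]; split_ifs <;> omega
      rw [this]
    exact le_antisymm (psum_upper μ _ p (n-1) (by omega) (by omega) fun i a b => (hv i a b).le)
      (psum_lower μ _ p (n-1) (by omega) (by omega) fun i a b => (hv i a b).ge)
  have hD : psum μ n = psum μ (n-1) + (k - η) := by
    have := psum_succ' μ (n-1) (by omega)
    rw [h5, show n - 1 + 1 = n by omega] at this
    rw [this]
    have a1 : ¬ (n - 1 = 0) := by omega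
    have a2 : ¬ (n - 1 < p) := by omega
    simp [a1, a2]
  rw [hA] at hB
  rw [hD]
  rw [Nat.cast_sub (by omega)] at hC
  push_cast at *
  constructor <;> linarith

lemma HasForm.depth_iff {n : ℕ} {μ : Fin n → ℤ} {k : ℤ} {p : ℕ} {ε η : ℤ}
    (h : HasForm μ k p ε η) :
    (1 < depth μ ∧ depth μ < 2) ↔ 
      ((n : ℤ) < p * (n - p) + (n - p) * ε + p * η ∧ 
       p * (n - p) + (n - p) * ε + p * η < 2 * (n : ℤ)) := by
  obtain ⟨e1, e2⟩ := h.psums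
  obtain ⟨h1, h2, h3, h4, h5⟩ := h
  have hn : (0 : ℚ) < n := by exact_mod_cast (by omega : 0 < n)
  have hp : (1 : ℚ) ≤ p := by exact_mod_cast h1
  have hpn : (p : ℚ) + 1 ≤ n := by exact_mod_cast h2
  have E0 : (0 : ℚ) ≤ ε ∧ (ε : ℚ) ≤ 1 := by rcases h3 with rfl | rfl <;> norm_num
  have N0 : (0 : ℚ) ≤ η ∧ (η : ℚ) ≤ 1 := by rcases h4 with rfl | rfl <;> norm_num
  have hd := depth_eq μ p h1 h2
    (by
      intro i hi
      have : k + 1 ≤ μ i := by rw [h5]; split_ifs <;> omega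
      have : (k : ℚ) + 1 ≤ μ i := by exact_mod_cast this
      refine le_trans ?_ this
      rw [div_le_iff₀ hn, e2]
      linarith)
    (by
      intro i hi
      have : μ i ≤ k := by rw [h5]; split_ifs <;> omega
      have : (μ i : ℚ) ≤ k := by exact_mod_cast this
      refine le_trans this ?_
      rw [le_div_iff₀ hn, e2]
      linarith)
  have hd2 : depth μ = (((p * (n - p) + (n - p) * ε + p * η : ℤ)) : ℚ) / n := by
    rw [hd, e1, e2]
    push_cast
    field_simp
    ring
  rw [hd2, lt_div_iff₀ hn, div_lt_iff₀ hn, one_mul]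
  norm_cast

lemma exists_form {n : ℕ} (hn : 2 ≤ n) (μ : Fin n → ℤ) (hμ : Antitone μ)
    (h1 : 1 < depth μ) (h2 : depth μ < 2) : ∃ k p ε η, HasForm μ k p ε η := by
  have hn0 : (0 : ℚ) < n := by exact_mod_cast (by omega : 0 < n)
  set θ : ℚ := (psum μ n : ℚ) / n with hθ
  have hS : (psum μ n : ℚ) = n * θ := by rw [hθ]; field_simp
  set k : ℤ := ⌊θ⌋ with hk
  have k1 : (k : ℚ) ≤ θ := Int.floor_le θ
  have k2 : θ < k + 1 := Int.lt_floor_add_one θ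
  -- find p
  obtain ⟨p, hpn, hlt, hge⟩ : ∃ p ≤ n, (∀ i : Fin n, (i : ℕ) < p → k + 1 ≤ μ i) ∧
      (∀ i : Fin n, p ≤ (i : ℕ) → μ i ≤ k) := by
    by_cases hex : ∃ j, ∃ h : j < n, μ ⟨j, h⟩ ≤ k
    · classical
      obtain ⟨hj, hj2⟩ := Nat.find_spec hex
      refine ⟨Nat.find hex, hj.le, fun i hi => ?_, fun i hi => ?_⟩
      · have := Nat.find_min hex hi
        push Not at this
        have := this i.isLt
        simp only [Fin.eta] at this
        omega
      · exact le_trans (hμ (show (⟨Nat.find hex, hj⟩ : Fin n) ≤ i from hi)) hj2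
    · push Not at hex
      refine ⟨n, le_rfl, fun i _ => ?_, fun i hi => ?_⟩
      · have := hex i i.isLt
        simp only [Fin.eta] at this
        omega
      · have := i.isLt
        omega
  have hltq : ∀ i : Fin n, (i : ℕ) < p → (k : ℚ) + 1 ≤ μ i := fun i hi => by
    exact_mod_cast hlt i hi
  have hgeq : ∀ i : Fin n, p ≤ (i : ℕ) → (μ i : ℚ) ≤ k := fun i hi => by
    exact_mod_cast hge i hi
  have hpn' : p < n := by
    by_contra hc
    have := psum_lower μ (k+1) 0 n (by omega) le_rfl (fun i _ _ => hltq i (by omega))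
    rw [psum_zero', hS] at this
    push_cast at this
    nlinarith
  have hp1 : 1 ≤ p := by
    by_contra hc
    have hp0 : p = 0 := by omega
    subst hp0
    have hconst : ∀ i : Fin n, (μ i : ℚ) = θ := by
      intro i
      refine le_antisymm ((hgeq i (by omega)).trans k1) ?_
      have a := psum_upper μ k 0 i (by omega) i.isLt.le (fun j _ _ => hgeq j (by omega))
      have b := psum_upper μ k (i+1) n i.isLt le_rfl (fun j _ _ => hgeq j (by omega))
      rw [psum_succ' μ i i.isLt, hS] at b
      rw [psum_zero'] at a
      push_cast at a b
      simp only [Fin.eta] at b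
      have hn1 : (1 : ℚ) ≤ n := by exact_mod_cast (by omega : 1 ≤ n)
      nlinarith [mul_nonneg (sub_nonneg.2 hn1) (sub_nonneg.2 k1)]
    have hd := depth_eq μ 1 le_rfl (by omega) (fun i _ => (hconst i).ge)
      (fun i _ => (hconst i).le)
    rw [psum_succ' μ 0 (by omega), psum_zero', hS] at hd
    push_cast at hd
    rw [hconst] at hd
    have : (1 : ℚ) / n * (n * θ) = θ := by field_simp
    rw [this] at hd
    linarith
  have hd := depth_eq μ p hp1 hpn' (fun i hi => k2.le.trans (hltq i hi))
    (fun i hi => (hgeq i hi).trans k1)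
  rw [hS, show (p : ℚ) / n * (n * θ) = p * θ by field_simp] at hd
  have hp0 : (1 : ℚ) ≤ p := by exact_mod_cast hp1
  have hpnq : (p : ℚ) + 1 ≤ n := by exact_mod_cast hpn'
  have up : (psum μ p : ℚ) < p * (k + 1) + 2 := by nlinarith
  have dn : (psum μ n : ℚ) - psum μ p > (n - p) * k - 2 := by rw [hS]; nlinarith
  -- top part
  have t0 : μ ⟨0, by omega⟩ ≤ k + 2 := by
    by_contra hc
    have hc' : (k : ℚ) + 3 ≤ μ ⟨0, by omega⟩ := by
      exact_mod_cast (by omega : k + 3 ≤ μ ⟨0, by omega⟩)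
    have a := psum_lower μ (k+1) 1 p hp1 hpn (fun i _ h => hltq i h)
    rw [psum_succ' μ 0 (by omega), psum_zero'] at a
    push_cast at a
    linarith
  have t1 : ∀ i : Fin n, 1 ≤ (i : ℕ) → (i : ℕ) < p → μ i = k + 1 := by
    intro i hi hip
    by_contra hc
    have hc1 : k + 2 ≤ μ i := by have := hlt i hip; omega
    have hc' : (k : ℚ) + 2 ≤ μ i := by exact_mod_cast hc1
    have a := psum_lower μ (k+1) (i+1) p hip hpn (fun i _ h => hltq i h)
    have b := psum_lower μ (k+2) 0 (i+1) (by omega) i.isLt (fun j _ h =>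
      hc'.trans (by exact_mod_cast hμ (show j ≤ i by rw [Fin.le_def]; omega)))
    rw [psum_zero'] at b
    have hi' : (1 : ℚ) ≤ (i : ℕ) := by exact_mod_cast hi
    push_cast at a b
    linarith
  -- bottom part
  have hlast : psum μ n = psum μ (n-1) + μ ⟨n-1, by omega⟩ := by
    have := psum_succ' μ (n-1) (by omega)
    rwa [show n - 1 + 1 = n by omega] at this
  have s0 : k - 1 ≤ μ ⟨n-1, by omega⟩ := by
    by_contra hc
    have hc' : (μ ⟨n-1, by omega⟩ : ℚ) ≤ k - 2 := by
      exact_mod_cast (by omega : μ ⟨n-1, by omega⟩ ≤ k - 2)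
    have a := psum_upper μ k p (n-1) (by omega) (by omega) (fun i h _ => hgeq i h)
    rw [hlast] at dn
    rw [Nat.cast_sub (by omega)] at a
    push_cast at a dn
    linarith
  have s1 : ∀ i : Fin n, p ≤ (i : ℕ) → (i : ℕ) < n - 1 → μ i = k := by
    intro i hip hi
    by_contra hc
    have hc1 : μ i ≤ k - 1 := by have := hge i hip; omega
    have hc' : (μ i : ℚ) ≤ k - 1 := by exact_mod_cast hc1
    have a := psum_upper μ k p i hip (by omega) (fun i h _ => hgeq i h)
    have b := psum_upper μ (k-1) i n (by omega) le_rfl (fun j h _ =>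
      le_trans (by exact_mod_cast hμ (show i ≤ j from h)) hc')
    have hi' : ((i : ℕ) : ℚ) + 2 ≤ n := by exact_mod_cast (by omega : (i : ℕ) + 2 ≤ n)
    linarith
  have t0' := hlt ⟨0, by omega⟩ hp1
  have s0' := hge ⟨n-1, by omega⟩ (by simp; omega)
  refine ⟨k, p, μ ⟨0, by omega⟩ - k - 1, k - μ ⟨n-1, by omega⟩, hp1, hpn', by omega, by omega, ?_⟩
  intro i
  by_cases i0 : (i : ℕ) = 0
  · have : i = ⟨0, by omega⟩ := Fin.ext i0
    rw [this]
    have : ¬ (0 = n - 1) := by omega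
    simp [this, show 0 < p from hp1]
  by_cases i1 : (i : ℕ) = n - 1
  · have : i = ⟨n-1, by omega⟩ := Fin.ext i1
    rw [this]
    have a1 : ¬ (n - 1 = 0) := by omega
    have a2 : ¬ (n - 1 < p) := by omega
    simp [a1, a2]
  by_cases i2 : (i : ℕ) < p
  · rw [t1 i (by omega) i2]; simp [i0, i1, i2]
  · rw [s1 i (by omega) (by omega)]; simp [i0, i1, i2]

def Lst (n p : ℕ) (ε η : ℤ) : Prop :=
  (p = 1 ∧ ε = 1 ∧ η = 1) ∨ (3 ≤ n ∧ p = 1 ∧ ε = 1 ∧ η = 0) ∨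
  (3 ≤ n ∧ p = 2 ∧ ε = 0 ∧ η = 1) ∨ (5 ≤ n ∧ p = 2 ∧ ε = 0 ∧ η = 0) ∨
  (n = 5 ∧ p = 2 ∧ ε = 1 ∧ η = 0) ∨ ((n = 6 ∨ n = 7 ∨ n = 8) ∧ p = 3 ∧ ε = 0 ∧ η = 0)

lemma lst_ineq {n p : ℕ} {ε η : ℤ} (hpn : p < n) (h : Lst n p ε η) :
    ((n : ℤ) < p * (n - p) + (n - p) * ε + p * η ∧ 
       p * (n - p) + (n - p) * ε + p * η < 2 * (n : ℤ)) := by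
  rcases h with ⟨rfl, rfl, rfl⟩ | ⟨h, rfl, rfl, rfl⟩ | ⟨h, rfl, rfl, rfl⟩ | ⟨h, rfl, rfl, rfl⟩ |
    ⟨h, rfl, rfl, rfl⟩ | ⟨h, rfl, rfl, rfl⟩ <;> push_cast <;> constructor <;> omega

lemma ineq_lst {n p : ℕ} {ε η : ℤ} (hp : 1 ≤ p) (hpn : p < n) (hε : ε = 0 ∨ ε = 1)
    (hη : η = 0 ∨ η = 1)
    (h1 : (n : ℤ) < p * (n - p) + (n - p) * ε + p * η)
    (h2 : p * (n - p) + (n - p) * ε + p * η < 2 * (n : ℤ)) :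
    Lst n p ε η ∨ Lst n (n-p) η ε := by
  obtain ⟨q, rfl⟩ := Nat.exists_eq_add_of_lt hpn
  obtain ⟨p, rfl⟩ := Nat.exists_eq_add_of_le' hp
  rw [show p + 1 + q + 1 - (p + 1) = q + 1 by omega]
  unfold Lst
  push_cast at h1 h2
  -- either one of p, q is small, or the product is large
  have key : p ≤ 2 ∨ q ≤ 2 := by
    by_contra hc
    push Not at hc
    obtain ⟨a, rfl⟩ := Nat.exists_eq_add_of_lt hc.1
    obtain ⟨b, rfl⟩ := Nat.exists_eq_add_of_lt hc.2
    push_cast at h2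
    rcases hε with rfl | rfl <;> rcases hη with rfl | rfl <;> nlinarith [Int.mul_nonneg (Int.natCast_nonneg a) (Int.natCast_nonneg b)]
  rcases key with h | h
  · interval_cases p <;> rcases hε with rfl | rfl <;> rcases hη with rfl | rfl <;>
      push_cast at h1 h2 <;> ring_nf at h1 h2 <;> simp <;> omega
  · interval_cases q <;> rcases hε with rfl | rfl <;> rcases hη with rfl | rfl <;>
      push_cast at h1 h2 <;> ring_nf at h1 h2 <;> simp <;> omega

/-- The list of vectors in the statement. -/
def VecLst {n : ℕ} (ν : Fin n → ℤ) : Prop :=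
  (ν = (fun i : Fin n => if (i : ℕ) = 0 then 2 else if (i : ℕ) = n - 1 then -1 else 0) ∨
         (3 ≤ n ∧ ν = fun i : Fin n => if (i : ℕ) = 0 then 2 else 0) ∨
         (3 ≤ n ∧ ν = fun i : Fin n => if (i : ℕ) = n - 1 then -1 else if (i : ℕ) ≤ 1 then 1 else 0) ∨
         (5 ≤ n ∧ ν = fun i : Fin n => if (i : ℕ) ≤ 1 then 1 else 0) ∨
         (n = 5 ∧ ν = fun i : Fin n => if (i : ℕ) = 0 then 2 else if (i : ℕ) = 1 then 1 else 0) ∨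
         ((n = 6 ∨ n = 7 ∨ n = 8) ∧ ν = fun i : Fin n => if (i : ℕ) ≤ 2 then 1 else 0))

lemma VecLst.form {n : ℕ} (hn : 2 ≤ n) {ν : Fin n → ℤ} (h : VecLst ν) :
    ∃ p ε η, HasForm ν 0 p ε η ∧ Lst n p ε η := by
  rcases h with rfl | ⟨h, rfl⟩ | ⟨h, rfl⟩ | ⟨h, rfl⟩ | ⟨h, rfl⟩ | ⟨h, rfl⟩
  · refine ⟨1, 1, 1, ⟨by omega, by omega, by simp, by simp, fun i => ?_⟩, by simp [Lst]⟩
    dsimp only; split_ifs <;> omega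
  · refine ⟨1, 1, 0, ⟨by omega, by omega, by simp, by simp, fun i => ?_⟩, by simp [Lst, h]⟩
    dsimp only; split_ifs <;> omega
  · refine ⟨2, 0, 1, ⟨by omega, by omega, by simp, by simp, fun i => ?_⟩, by simp [Lst, h]⟩
    dsimp only; split_ifs <;> omega
  · refine ⟨2, 0, 0, ⟨by omega, by omega, by simp, by simp, fun i => ?_⟩, by simp [Lst, h]⟩
    dsimp only; split_ifs <;> omega
  · refine ⟨2, 1, 0, ⟨by omega, by omega, by simp, by simp, fun i => ?_⟩, by simp [Lst, h]⟩
    dsimp only; split_ifs <;> omega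
  · refine ⟨3, 0, 0, ⟨by omega, by omega, by simp, by simp, fun i => ?_⟩, by simp [Lst, h]⟩
    dsimp only; split_ifs <;> omega

lemma HasForm.vecLst {n : ℕ} {μ : Fin n → ℤ} {k : ℤ} {p : ℕ} {ε η : ℤ}
    (h : HasForm μ k p ε η) (hl : Lst n p ε η) : VecLst (fun i => μ i - k) := by
  obtain ⟨h1, h2, -, -, h5⟩ := h
  rcases hl with ⟨rfl, rfl, rfl⟩ | ⟨h, rfl, rfl, rfl⟩ | ⟨h, rfl, rfl, rfl⟩ | ⟨h, rfl, rfl, rfl⟩ |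
    ⟨h, rfl, rfl, rfl⟩ | ⟨h, rfl, rfl, rfl⟩
  · refine Or.inl (funext fun i => ?_)
    rw [h5]; split_ifs <;> omega
  · refine Or.inr (Or.inl ⟨h, funext fun i => ?_⟩)
    rw [h5]; split_ifs <;> omega
  · refine Or.inr (Or.inr (Or.inl ⟨h, funext fun i => ?_⟩))
    rw [h5]; split_ifs <;> omega
  · refine Or.inr (Or.inr (Or.inr (Or.inl ⟨h, funext fun i => ?_⟩)))
    rw [h5]; split_ifs <;> omega
  · refine Or.inr (Or.inr (Or.inr (Or.inr (Or.inl ⟨h, funext fun i => ?_⟩))))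
    rw [h5]; split_ifs <;> omega
  · refine Or.inr (Or.inr (Or.inr (Or.inr (Or.inr ⟨h, funext fun i => ?_⟩))))
    rw [h5]; split_ifs <;> omega

theorem stmt0 (n : ℕ) (hn : 2 ≤ n) (μ : Fin n → ℤ) (hμ : Antitone μ) :
    (1 < depth μ ∧ depth μ < 2) ↔
      ∃ (k : ℤ) (ν : Fin n → ℤ),
        ((fun i => μ i - k) = ν ∨ (fun i => dualVec μ i - k) = ν) ∧
        (ν = (fun i : Fin n => if (i : ℕ) = 0 then 2 else if (i : ℕ) = n - 1 then -1 else 0) ∨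
         (3 ≤ n ∧ ν = fun i : Fin n => if (i : ℕ) = 0 then 2 else 0) ∨
         (3 ≤ n ∧ ν = fun i : Fin n => if (i : ℕ) = n - 1 then -1 else if (i : ℕ) ≤ 1 then 1 else 0) ∨
         (5 ≤ n ∧ ν = fun i : Fin n => if (i : ℕ) ≤ 1 then 1 else 0) ∨
         (n = 5 ∧ ν = fun i : Fin n => if (i : ℕ) = 0 then 2 else if (i : ℕ) = 1 then 1 else 0) ∨
         ((n = 6 ∨ n = 7 ∨ n = 8) ∧ ν = fun i : Fin n => if (i : ℕ) ≤ 2 then 1 else 0)) := by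
  constructor
  · rintro ⟨h1, h2⟩
    obtain ⟨k, p, ε, η, hf⟩ := exists_form hn μ hμ h1 h2
    obtain ⟨i1, i2⟩ := hf.depth_iff.1 ⟨h1, h2⟩
    rcases ineq_lst hf.1 hf.2.1 hf.2.2.1 hf.2.2.2.1 i1 i2 with hl | hl
    · exact ⟨k, _, Or.inl rfl, hf.vecLst hl⟩
    · exact ⟨-k-1, _, Or.inr rfl, hf.dual.vecLst hl⟩
  · rintro ⟨k, ν, hor, hv⟩
    obtain ⟨p, ε, η, hf, hl⟩ := VecLst.form hn hv
    have hi := lst_ineq hf.2.1 hl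
    rcases hor with rfl | rfl
    · exact hf.shift.depth_iff.2 hi
    · have hf' := hf.shift.dual
      rw [dualVec_dualVec] at hf'
      rw [hf'.depth_iff, Nat.cast_sub hf.2.1.le]
      constructor <;> nlinarith [hi.1, hi.2]
end

section
/- Let n ≥ 1, let i, j ∈ {0,…,n} and k ∈ {1,…,n+1}, and define the following elements of the symmetric group S_{n+1}: w₁ := s₁s₂⋯sᵢ, w₂ := s₁s₂⋯s_j, w₃ := sₙs_{n−1}⋯s_k (with the convention that an empty product is the identity, i.e. w₁ = 1 if i = 0, w₂ = 1 if j = 0, w₃ = 1 if k = n+1). Then there exist v₁, v₂, v₃ ∈ S_{n+1} satisfying: v₁⁻¹(m) > v₁⁻¹(i+1) for all m > i+1; v₂⁻¹(m) > v₂⁻¹(j+1) for all m > j+1; v₃⁻¹(m) < v₃⁻¹(k) for all m < k; such that at least one of the following holds: (i) there exists t ∈ {1,…,n} such that each of the three elements v₃⁻¹w₁v₁, v₁⁻¹w₂v₂, v₂⁻¹w₃v₃ lies in the subgroup of S_{n+1} generated by the simple transpositions s_ℓ with ℓ ∈ {1,…,n} \ {t}; or (ii) there exist pairwise disjoint subsets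 I₁, I₂, I₃ ⊆ {1,…,n} such that v₃⁻¹w₁v₁ is a product of the simple transpositions s_ℓ, ℓ ∈ I₁, each used exactly once (in some order), and similarly v₁⁻¹w₂v₂ for I₂ and v₂⁻¹w₃v₃ for I₃. -/
/-- The simple transposition of `Fin N` swapping the 0-indexed positions `i` and
`i+1` (the identity if `i + 1 ≥ N`).  `simpleT N (ℓ-1)` is the paper's `s_ℓ`. -/
def simpleT (N : ℕ) (i : ℕ) : Equiv.Perm (Fin N) :=
  if h : i + 1 < N then Equiv.swap ⟨i, by omega⟩ ⟨i + 1, h⟩ else 1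

/-- `w₁ = s₁ s₂ ⋯ sᵢ ∈ S_{n+1}` (0-indexed product `s₀ s₁ ⋯ s_{i-1}`). -/
def wUp (n i : ℕ) : Equiv.Perm (Fin (n + 1)) :=
  ((List.range i).map (simpleT (n + 1))).prod

/-- `w₃ = sₙ s_{n−1} ⋯ s_k ∈ S_{n+1}` (0-indexed product `s_{n-1} s_{n-2} ⋯ s_{k-1}`). -/
def wDown (n k : ℕ) : Equiv.Perm (Fin (n + 1)) :=
  ((List.range (n + 1 - k)).map fun u => simpleT (n + 1) (n - 1 - u)).prod

/-- The set of simple transpositions `s_ℓ` of `S_{n+1}` with 0-indexed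
`ℓ ∈ {0,…,n−1} \ {t}`. -/
def genSet (n t : ℕ) : Set (Equiv.Perm (Fin (n + 1))) :=
  {g | ∃ ℓ, ℓ < n ∧ ℓ ≠ t ∧ g = simpleT (n + 1) ℓ}

def UU (i m : ℕ) : ℕ := if m < i then m + 1 else if m = i then 0 else m

def DD (n K m : ℕ) : ℕ := if m < K then m else if m = K then n else m - 1

theorem simpleT_val (n i : ℕ) (hi : i < n) (x : Fin (n + 1)) :
    ((simpleT (n + 1) i x : Fin (n + 1)) : ℕ) =
      if (x : ℕ) = i then i + 1 else if (x : ℕ) = i + 1 then i else x := by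
  unfold simpleT
  rw [dif_pos (by omega), Equiv.swap_apply_def]
  split_ifs <;> simp_all [Fin.ext_iff]

theorem wUp_val (n i : ℕ) (hi : i ≤ n) (x : Fin (n + 1)) :
    ((wUp n i x : Fin (n + 1)) : ℕ) = UU i x := by
  induction i generalizing x with
  | zero =>
    simp only [wUp, UU, List.range_zero, List.map_nil, List.prod_nil, Equiv.Perm.one_apply]
    split_ifs <;> omega
  | succ i ih =>
    have h : wUp n (i + 1) = wUp n i * simpleT (n + 1) i := by
      simp [wUp, List.range_succ]
    rw [h, Equiv.Perm.mul_apply, ih (by omega), simpleT_val n i (by omega)]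
    unfold UU
    split_ifs <;> omega

theorem wDown_val' (n d : ℕ) (hd : d ≤ n) (x : Fin (n + 1)) :
    ((((List.range d).map fun u => simpleT (n + 1) (n - 1 - u)).prod x : Fin (n + 1)) : ℕ)
      = DD n (n - d) x := by
  induction d generalizing x with
  | zero =>
    simp only [DD, List.range_zero, List.map_nil, List.prod_nil, Equiv.Perm.one_apply]
    split_ifs <;> omega
  | succ d ih =>
    rw [List.range_succ, List.map_append, List.prod_append, Equiv.Perm.mul_apply, ih (by omega)]
    simp only [List.map_cons, List.map_nil, List.prod_cons, List.prod_nil, mul_one]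
    rw [simpleT_val n (n - 1 - d) (by omega)]
    unfold DD
    have := x.2
    split_ifs <;> omega

theorem wDown_val (n k : ℕ) (h1 : 1 ≤ k) (h2 : k ≤ n + 1) (x : Fin (n + 1)) :
    ((wDown n k x : Fin (n + 1)) : ℕ) = DD n (k - 1) x := by
  unfold wDown
  rw [wDown_val' n _ (by omega)]
  congr 1
  omega

theorem mem_par (n t : ℕ) (f : Equiv.Perm (Fin (n + 1)))
    (h : ∀ x, ((f x : Fin (n + 1)) : ℕ) ≤ t ↔ (x : ℕ) ≤ t) :
    f ∈ Subgroup.closure (genSet n t) := by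
  have key : ∀ d : ℕ, ∀ a b : Fin (n + 1), (b : ℕ) = a + d → ((a : ℕ) ≤ t ↔ (b : ℕ) ≤ t) →
      b ∈ MulAction.orbit (Subgroup.closure (genSet n t)) a := by
    intro d
    induction d with
    | zero =>
      intro a b hab _
      have : b = a := Fin.ext (by omega)
      subst this
      exact MulAction.mem_orbit_self _
    | succ d ih =>
      intro a b hab hside
      have hb := b.2
      have h1 := ih a ⟨a + d, by omega⟩ rfl (by simp only; omega)
      rw [← MulAction.orbit_eq_iff] at h1
      rw [← h1]
      refine ⟨⟨simpleT (n + 1) (a + d), Subgroup.subset_closure ⟨a + d, by omega, by omega, rfl⟩⟩, ?_⟩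
      apply Fin.ext
      change ((simpleT (n + 1) (a + d) ⟨a + d, _⟩ : Fin (n + 1)) : ℕ) = b
      rw [simpleT_val n _ (by omega)]
      simp only [if_true]
      omega
  rw [mem_closure_isSwap]
  · refine ⟨Set.toFinite _, fun x => ?_⟩
    rcases le_total (x : ℕ) (f x : Fin (n + 1)) with hx | hx
    · exact key (f x - x) x (f x) (by omega) (h x).symm
    · rw [MulAction.mem_orbit_symm]
      exact key (x - f x) (f x) x (by omega) (h x)
  · rintro g ⟨l, hl, _, rfl⟩
    refine ⟨⟨l, by omega⟩, ⟨l + 1, by omega⟩, by simp, ?_⟩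
    unfold simpleT
    rw [dif_pos (by omega)]

theorem exists_sort (n : ℕ) (A : Finset (Fin (n + 1))) :
    ∃ σ : Equiv.Perm (Fin (n + 1)),
      (∀ a b, a < b → (b ∈ A → a ∈ A) → σ a < σ b) ∧
      (∀ a, ((σ a : Fin (n + 1)) : ℕ) < A.card ↔ a ∈ A) := by
  classical
  let f : Fin (n + 1) → ℕ := fun a => (if a ∈ A then 0 else n + 1) + a
  have finj : ∀ a b, f a = f b → a = b := by
    intro a b hab
    apply Fin.ext
    have := a.2; have := b.2
    simp only [f] at hab
    split_ifs at hab <;> omega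
  let S : Fin (n + 1) → Finset (Fin (n + 1)) := fun a => Finset.univ.filter (fun b => f b < f a)
  have hS : ∀ a, (S a).card < n + 1 := by
    intro a
    have : S a ⊂ Finset.univ := by
      rw [Finset.ssubset_univ_iff]
      intro h
      have : a ∈ S a := by rw [h]; simp
      simp [S] at this
    simpa using Finset.card_lt_card this
  let g : Fin (n + 1) → Fin (n + 1) := fun a => ⟨(S a).card, hS a⟩
  have hg : ∀ a b, f a < f b → g a < g b := by
    intro a b hab
    change (S a).card < (S b).card
    apply Finset.card_lt_card
    rw [Finset.ssubset_iff_of_subset]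
    · exact ⟨a, by simp [S, hab], by simp [S]⟩
    · intro x hx
      simp only [S, Finset.mem_filter, Finset.mem_univ, true_and] at hx ⊢
      omega
  have ginj : Function.Injective g := by
    intro a b hab
    rcases lt_trichotomy (f a) (f b) with h | h | h
    · exact absurd (hg _ _ h) (by rw [hab]; exact lt_irrefl _)
    · exact finj _ _ h
    · exact absurd (hg _ _ h) (by rw [hab]; exact lt_irrefl _)
  refine ⟨Equiv.ofBijective g (Finite.injective_iff_bijective.mp ginj), ?_, ?_⟩
  · intro a b hab hA
    apply hg
    have := a.2
    have h2 : (a : ℕ) < b := hab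
    simp only [f]
    split_ifs <;> first | omega | tauto
  · intro a
    change (S a).card < A.card ↔ a ∈ A
    have ha := a.2
    constructor
    · intro h
      by_contra hna
      have : A ⊆ S a := by
        intro b hb
        have := b.2
        simp only [S, f, Finset.mem_filter, Finset.mem_univ, true_and, if_pos hb, if_neg hna]
        omega
      have := Finset.card_le_card this
      omega
    · intro hA
      apply Finset.card_lt_card
      rw [Finset.ssubset_iff_of_subset]
      · exact ⟨a, hA, by simp [S]⟩
      · intro b hb
        by_contra hnb
        simp only [S, f, Finset.mem_filter, Finset.mem_univ, true_and, if_pos hA, if_neg hnb] at hb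
        omega

theorem caseI (n : ℕ) (i j K : Fin (n + 1)) (w1 w2 w3 : Equiv.Perm (Fin (n + 1)))
    (C : Finset (Fin (n + 1))) (hinv : ∀ x, w1 (w2 (w3 x)) ∈ C ↔ x ∈ C)
    (hne : C.Nonempty) (hnu : ∃ x, x ∉ C)
    (hK : K ∈ C → ∀ m < K, m ∈ C)
    (hj : ∀ x, j < w3 x → x ∈ C → w3.symm j ∈ C)
    (hi : ∀ m, i < m → w1 m ∈ C → w1 i ∈ C) :
    ∃ v₁ v₂ v₃ : Equiv.Perm (Fin (n + 1)),
      (∀ m, i < m → v₁⁻¹ i < v₁⁻¹ m) ∧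
      (∀ m, j < m → v₂⁻¹ j < v₂⁻¹ m) ∧
      (∀ m, m < K → v₃⁻¹ m < v₃⁻¹ K) ∧
      ∃ t : ℕ, t < n ∧
          v₃⁻¹ * w1 * v₁ ∈ Subgroup.closure (genSet n t) ∧
          v₁⁻¹ * w2 * v₂ ∈ Subgroup.closure (genSet n t) ∧
          v₂⁻¹ * w3 * v₃ ∈ Subgroup.closure (genSet n t) := by
  classical
  obtain ⟨σ3, h3, m3⟩ := exists_sort n C
  obtain ⟨σ2, h2, m2⟩ := exists_sort n (C.map w3.toEmbedding)
  obtain ⟨σ1, h1, m1⟩ := exists_sort n (C.map w1.symm.toEmbedding)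
  have e2 : ∀ y, y ∈ C.map w3.toEmbedding ↔ w3.symm y ∈ C := by
    intro y; rw [Finset.mem_map_equiv]
  have e1 : ∀ y, y ∈ C.map w1.symm.toEmbedding ↔ w1 y ∈ C := by
    intro y; rw [Finset.mem_map_equiv]; simp
  simp only [Finset.card_map, e1, e2] at h1 h2 m1 m2
  have c1 : 0 < C.card := hne.card_pos
  have c2 : C.card < n + 1 := by
    obtain ⟨x, hx⟩ := hnu
    have : C ⊂ Finset.univ := by
      rw [Finset.ssubset_univ_iff]; rintro rfl; simp at hx
    simpa using Finset.card_lt_card this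
  have f : ∀ a : ℕ, a ≤ C.card - 1 ↔ a < C.card := by intro a; omega
  refine ⟨σ1⁻¹, σ2⁻¹, σ3⁻¹, ?_, ?_, ?_, C.card - 1, by omega, ?_, ?_, ?_⟩
  · intro m hm
    rw [inv_inv]
    exact h1 _ _ hm (hi m hm)
  · intro m hm
    rw [inv_inv]
    refine h2 _ _ hm (hj _ (by simpa using hm))
  · intro m hm
    rw [inv_inv]
    exact h3 _ _ hm (fun h => hK h m hm)
  · apply mem_par
    intro x
    rw [f, f, inv_inv, Equiv.Perm.mul_apply, Equiv.Perm.mul_apply, m3, ← m1]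
    simp
  · apply mem_par
    intro x
    rw [f, f, inv_inv, Equiv.Perm.mul_apply, Equiv.Perm.mul_apply, m1, 
      ← w3.apply_symm_apply (σ2⁻¹ x), hinv, ← m2]
    simp
  · apply mem_par
    intro x
    rw [f, f, inv_inv, Equiv.Perm.mul_apply, Equiv.Perm.mul_apply, m2, Equiv.symm_apply_apply, ← m3]
    simp

/-- A predicate closed under forward steps (inside the class of `a`) spreads over cycles. -/
theorem spread {α : Type*} [Finite α] (w : Equiv.Perm α) (P : α → Prop) (a b : α)
    (h : ∀ x, w.SameCycle a x → P x → P (w x)) (hab : w.SameCycle a b) (ha : P a) : P b := by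
  obtain ⟨m, _, rfl⟩ := hab.exists_pow_eq'
  have : ∀ m : ℕ, P ((w ^ m) a) := by
    intro m
    induction m with
    | zero => simpa using ha
    | succ m ih =>
      rw [pow_succ', Equiv.Perm.mul_apply]
      exact h _ ⟨m, by simp⟩ ih
  exact this m

theorem spread_back {α : Type*} [Finite α] (w : Equiv.Perm α) (P : α → Prop) (a b : α)
    (h : ∀ x, w.SameCycle a x → P (w x) → P x) (hab : w.SameCycle a b) (ha : P b) : P a := by
  by_contra hna
  exact spread w (fun x => ¬ P x) a b (fun x hx hx2 hx3 => hx2 (h x hx hx3)) hab hna ha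

theorem exists_rot (n : ℕ) (hn : 1 ≤ n) (w : Equiv.Perm (Fin (n + 1))) (K s : Fin (n + 1))
    (hw : ∀ x, w.SameCycle K x) :
    ∃ v : Equiv.Perm (Fin (n + 1)), v s = K ∧ v * wUp n n = w * v := by
  obtain ⟨n, rfl⟩ : ∃ m, n = m + 1 := ⟨n - 1, by omega⟩
  have hc : wUp (n + 1) (n + 1) = finRotate (n + 2) := by
    ext x
    rw [wUp_val _ _ le_rfl, coe_finRotate]
    have := x.2
    simp only [UU, Fin.ext_iff, Fin.val_last]
    split_ifs <;> omega
  rw [hc]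
  have hfix : ∀ x, w x ≠ x := by
    intro x hx
    have h1 : ∀ y, w.SameCycle x y → y = x := by
      intro y hy
      exact spread w (fun z => z = x) x y (fun z _ (hz : z = x) => (by rw [hz, hx] : w z = x)) hy rfl
    have h2 : ∀ y, y = x := fun y => h1 y ((hw x).symm.trans (hw y))
    have h3 := (h2 0).trans (h2 1).symm
    simp at h3
  have hcyc : w.IsCycle := ⟨K, hfix K, fun y _ => hw y⟩
  have hsup : w.support = Finset.univ := by
    ext x; simp [hfix x]
  have hconj := (isCycle_finRotate (n := n)).isConj hcyc (by rw [support_finRotate, hsup])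
  obtain ⟨u, hu⟩ := isConj_iff.mp hconj
  obtain ⟨r, hr⟩ := (isCycle_finRotate (n := n)).exists_pow_eq (x := s) (y := u⁻¹ K)
    (by rw [← Equiv.Perm.mem_support, support_finRotate]; simp)
    (by rw [← Equiv.Perm.mem_support, support_finRotate]; simp)
  refine ⟨u * finRotate (n + 2) ^ r, ?_, ?_⟩
  · rw [Equiv.Perm.mul_apply, hr]; simp
  · rw [← hu, mul_assoc, ← pow_succ, pow_succ']; group

theorem arA (n i j K x p : ℕ) (hmax : K ≤ i ∨ K ≤ j) (hx : x < K) (hpK : p ≠ K)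
    (hx1 : DD n K x ≠ j) (hx2 : UU j (DD n K x) ≠ i)
    (hp1 : DD n K p ≠ j) (hp2 : UU j (DD n K p) ≠ i)
    (h1 : x ≤ p) (h3 : x = UU i (UU j (DD n K p))) : False := by
  have e1 : DD n K x = x := by unfold DD; split_ifs; rfl
  rw [e1] at hx1 hx2
  generalize hy : DD n K p = y at *
  generalize hz : UU j y = z at *
  unfold DD at hy
  unfold UU at h3 hz hx2
  split_ifs at * <;> omega

theorem arB (n i j K x : ℕ) (hmax : K ≤ i ∨ K ≤ j) (h1 : i < x) (h2 : x < K)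
    (h : UU i (UU j (DD n K x)) ≠ K) :
    i < UU i (UU j (DD n K x)) ∧ UU i (UU j (DD n K x)) < K := by
  have e1 : DD n K x = x := by unfold DD; split_ifs; rfl
  have e2 : UU j x = x + 1 := by unfold UU; split_ifs <;> omega
  rw [e1, e2] at h ⊢
  unfold UU at *
  split_ifs at * <;> omega

theorem arC (n i j K x : ℕ) (hK : x ≠ K) (hi : UU i 0 ≠ 0)
    (h1 : i < UU i (UU j (DD n K x))) (h2 : K < UU i (UU j (DD n K x))) :
    i < x ∧ K < x := by
  generalize hy : DD n K x = y at *
  generalize hz : UU j y = z at *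
  generalize hz : UU i z = z' at *
  unfold DD at hy
  unfold UU at *
  split_ifs at * <;> omega

theorem arD (n i j K x : ℕ) (hmax : K ≤ i ∨ K ≤ j) (h1 : j < x) (h2 : x < K)
    (h : UU i (UU j (DD n K x)) ≠ K) :
    j < UU i (UU j (DD n K x)) ∧ UU i (UU j (DD n K x)) < K := by
  have e1 : DD n K x = x := by unfold DD; split_ifs; rfl
  have e2 : UU j x = x := by unfold UU; split_ifs <;> omega
  rw [e1, e2] at h ⊢
  unfold UU at *
  split_ifs at * <;> omega

theorem arE (n i j K x : ℕ) (hK : x ≠ K) (ha : UU i (UU j (DD n K x)) ≠ UU i 0)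
    (h1 : j + 1 < UU i (UU j (DD n K x))) (h2 : K < UU i (UU j (DD n K x))) :
    j + 1 < x ∧ K < x := by
  generalize hy : DD n K x = y at *
  generalize hz : UU j y = z at *
  generalize hz : UU i z = z' at *
  unfold DD at hy
  unfold UU at *
  split_ifs at * <;> omega

theorem nonCycle (n : ℕ) (i j K : Fin (n + 1)) (w1 w2 w3 : Equiv.Perm (Fin (n + 1)))
    (h1 : ∀ x, ((w1 x : Fin (n + 1)) : ℕ) = UU i x)
    (h2 : ∀ x, ((w2 x : Fin (n + 1)) : ℕ) = UU j x)
    (h3 : ∀ x, ((w3 x : Fin (n + 1)) : ℕ) = DD n K x)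
    (hmax : (K : ℕ) ≤ i ∨ (K : ℕ) ≤ j)
    (hnc : ∃ x, ¬ (w1 * w2 * w3).SameCycle K x) :
    ∃ C : Finset (Fin (n + 1)), (∀ x, w1 (w2 (w3 x)) ∈ C ↔ x ∈ C) ∧
    C.Nonempty ∧ (∃ x, x ∉ C) ∧
    (K ∈ C → ∀ m < K, m ∈ C) ∧
    (∀ x, j < w3 x → x ∈ C → w3.symm j ∈ C) ∧
    (∀ m, i < m → w1 m ∈ C → w1 i ∈ C) := by
  classical
  set w := w1 * w2 * w3 with hwdef
  have hW : ∀ x, w x = w1 (w2 (w3 x)) := fun x => rfl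
  have hw : ∀ x, ((w x : Fin (n + 1)) : ℕ) = UU i (UU j (DD n K x)) := by
    intro x; rw [hW, h1, h2, h3]
  have e1 : w1 i = 0 := by
    apply Fin.ext; rw [h1]; simp [UU]
  have e2 : w2 j = 0 := by
    apply Fin.ext; rw [h2]; simp [UU]
  have ea : w (w3.symm j) = w1 0 := by
    rw [hW, Equiv.apply_symm_apply, e2]
  have ha : ((w1 0 : Fin (n + 1)) : ℕ) = UU i 0 := by rw [h1]; simp
  have hi := i.2
  have hj := j.2
  have hKn := K.2
  have sc : ∀ y x, w.SameCycle y (w x) ↔ w.SameCycle y x := fun y x =>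
    Equiv.Perm.sameCycle_apply_right
  have neK : ∀ {x y : Fin (n + 1)}, w.SameCycle y x → ∀ z, ¬ w.SameCycle y z → (x : ℕ) ≠ z := by
    intro x y hxy z hz h
    exact hz (Fin.ext h ▸ hxy)
  have sja : ∀ y, w.SameCycle y (w3.symm j) ↔ w.SameCycle y (w1 0) := by
    intro y; rw [← sc, ea]
  by_cases c0 : w.SameCycle K 0
  · by_cases ca : w.SameCycle K (w1 0)
    · -- everything special lies in the cycle of `K`
      refine ⟨Finset.univ.filter (fun x => w.SameCycle K x), ?_⟩
      simp only [Finset.mem_filter, Finset.mem_univ, true_and, ← hW, sc, e1, sja]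
      refine ⟨fun _ => trivial, ⟨K, by simp [Equiv.Perm.SameCycle.refl]⟩, hnc, ?_, fun _ _ _ => ca, fun _ _ _ => c0⟩
      intro _ m hm
      by_contra hmC
      -- minimal element of the complement
      obtain ⟨x, hx, hmin⟩ := Finset.exists_min_image
        (Finset.univ.filter (fun x => ¬ w.SameCycle K x)) (fun x => (x : ℕ)) ⟨m, by simpa using hmC⟩
      simp only [Finset.mem_filter, Finset.mem_univ, true_and] at hx hmin
      have hxK : (x : ℕ) < K := lt_of_le_of_lt (hmin m hmC) hm
      have props : ∀ y, ¬ w.SameCycle K y → (y : ℕ) ≠ K ∧ DD n K y ≠ j ∧ UU j (DD n K y) ≠ i := by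
        intro y hy
        refine ⟨?_, ?_, ?_⟩
        · intro h
          rw [Fin.ext h] at hy
          exact hy (Equiv.Perm.SameCycle.refl w K)
        · intro h
          rw [← h3] at h
          have : w y = w1 0 := by rw [hW, Fin.ext h, e2]
          rw [← sc, this] at hy
          exact hy ca
        · intro h
          rw [← h3, ← h2] at h
          have : w y = 0 := by rw [hW, Fin.ext h, e1]
          rw [← sc, this] at hy
          exact hy c0
      obtain ⟨p, hp⟩ := w.surjective x
      have hpC : ¬ w.SameCycle K p := by rw [← sc, hp]; exact hx
      have q1 := props x hx
      have q2 := props p hpC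
      have r3 := hw p
      rw [hp] at r3
      exact arA n i j K x p hmax hxK q2.1 q1.2.1 q1.2.2 q2.2.1 q2.2.2 (hmin p hpC) r3
    · -- the cycle of `w1 0`
      refine ⟨Finset.univ.filter (fun x => w.SameCycle (w1 0) x), ?_⟩
      have caK : ¬ w.SameCycle (w1 0) K := fun h => ca h.symm
      have ca0 : ¬ w.SameCycle (w1 0) 0 := fun h => ca (c0.trans h.symm)
      simp only [Finset.mem_filter, Finset.mem_univ, true_and, ← hW, sc, e1, sja]
      refine ⟨fun _ => trivial, ⟨w1 0, by simp [Equiv.Perm.SameCycle.refl]⟩, ⟨K, caK⟩, fun h => absurd h caK,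
        fun _ _ _ => Equiv.Perm.SameCycle.refl w _, ?_⟩
      intro m hm hmC
      exfalso
      have hx1 : w1 m = m := by
        apply Fin.ext; rw [h1]
        have : (i : ℕ) < m := hm
        unfold UU; split_ifs <;> omega
      rw [hx1] at hmC
      have hm' : (i : ℕ) < m := hm
      have hmK := neK hmC K caK
      have h00 := neK (Equiv.Perm.SameCycle.refl w (w1 0)) 0 ca0
      rw [ha, Fin.val_zero] at h00
      rcases lt_or_gt_of_ne hmK with hlt | hgt
      · have := spread w (fun x => (i : ℕ) < x ∧ (x : ℕ) < K) m (w1 0) (by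
          intro x hx ⟨hx1, hx2⟩
          have hxK := neK (hmC.trans ((sc _ _).mpr hx)) K caK
          rw [hw] at hxK
          simp only [hw]
          exact arB n i j K x hmax hx1 hx2 hxK) hmC.symm ⟨hm', hlt⟩
        rw [ha] at this
        unfold UU at this h00
        split_ifs at this h00 <;> omega
      · have := spread_back w (fun x => (i : ℕ) < x ∧ (K : ℕ) < x) (w1 0) m (by
          intro x hx hP
          have hxK := neK hx K caK
          simp only [hw] at hP
          exact arC n i j K x hxK h00 hP.1 hP.2) hmC ⟨hm', hgt⟩
        rw [ha] at this
        unfold UU at this h00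
        split_ifs at this h00 <;> omega
  · by_cases ca : w.SameCycle K (w1 0)
    · -- the cycle of `0`
      refine ⟨Finset.univ.filter (fun x => w.SameCycle 0 x), ?_⟩
      have c0K : ¬ w.SameCycle 0 K := fun h => c0 h.symm
      have c0a : ¬ w.SameCycle 0 (w1 0) := fun h => c0K (h.trans ca.symm)
      simp only [Finset.mem_filter, Finset.mem_univ, true_and, ← hW, sc, e1, sja]
      refine ⟨fun _ => trivial, ⟨0, by simp [Equiv.Perm.SameCycle.refl]⟩, ⟨K, c0K⟩, fun h => absurd h c0K, ?_,
        fun _ _ _ => Equiv.Perm.SameCycle.refl w _⟩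
      intro m hm hmC
      exfalso
      have hm' : (j : ℕ) < DD n K m := by rw [← h3]; exact hm
      have hmK := neK hmC K c0K
      rcases lt_or_gt_of_ne hmK with hlt | hgt
      · have := spread w (fun x => (j : ℕ) < x ∧ (x : ℕ) < K) m 0 (by
          intro x hx ⟨hx1, hx2⟩
          have hxK := neK (hmC.trans ((sc _ _).mpr hx)) K c0K
          rw [hw] at hxK
          simp only [hw]
          exact arD n i j K x hmax hx1 hx2 hxK) hmC.symm (by
            unfold DD at hm'; split_ifs at hm' <;> exact ⟨by omega, hlt⟩)
        simp at this
      · have := spread_back w (fun x => (j : ℕ) + 1 < x ∧ (K : ℕ) < x) 0 m (by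
          intro x hx hP
          have hxK := neK hx K c0K
          have hxa := neK ((sc _ _).mpr hx) (w1 0) c0a
          rw [hw, ha] at hxa
          simp only [hw] at hP
          exact arE n i j K x hxK hxa hP.1 hP.2) hmC (by
            unfold DD at hm'; split_ifs at hm' <;> omega)
        simp at this
    · refine ⟨Finset.univ.filter (fun x => ¬ w.SameCycle K x), ?_⟩
      simp only [Finset.mem_filter, Finset.mem_univ, true_and, ← hW, sc, e1, sja]
      exact ⟨fun _ => trivial, ⟨0, by simpa using c0⟩, ⟨K, by simp [Equiv.Perm.SameCycle.refl]⟩,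
        fun h => absurd (Equiv.Perm.SameCycle.refl w K) h,
        fun _ _ _ => ca, fun _ _ _ => c0⟩

theorem seqA (n i j K : ℕ) (X : ℕ → ℕ) (hij : i ≤ j) (hKj : K ≤ j) (hjn : j ≤ n)
    (hX : ∀ p < n, X (p + 1) = UU i (UU j (DD n K (X p))))
    (hX0 : X 0 = UU i (UU j (DD n K (X n))))
    (hXj : X j = K) (hinj : ∀ p q, p ≤ n → q ≤ n → X p = X q → p = q) :
    X 0 = UU i 0 ∧ (∀ p, j < p → p ≤ n → j < X p) ∧
      (∀ p q, p < q → q ≤ n → i < X p → X q ≠ 0) := by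
  have tail : ∀ r, j + 1 + r ≤ n → X (j + 1 + r) = n - r := by
    intro r
    induction r with
    | zero =>
      intro h
      rw [add_zero, hX j (by omega), hXj]
      have e1 : DD n K K = n := by simp [DD]
      have e2 : UU j n = n := by unfold UU; split_ifs <;> omega
      have e3 : UU i n = n := by unfold UU; split_ifs <;> omega
      rw [e1, e2, e3, Nat.sub_zero]
    | succ r ih =>
      intro h
      rw [← add_assoc, hX _ (by omega), ih (by omega)]
      have e1 : DD n K (n - r) = n - (r + 1) := by unfold DD; split_ifs <;> omega
      have e2 : UU j (n - (r + 1)) = n - (r + 1) := by unfold UU; split_ifs <;> omega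
      have e3 : UU i (n - (r + 1)) = n - (r + 1) := by unfold UU; split_ifs <;> omega
      rw [e1, e2, e3]
  have hD : DD n K (X n) = j := by
    rcases Nat.lt_or_ge j n with h | h
    · have := tail (n - (j + 1)) (by omega)
      rw [show j + 1 + (n - (j + 1)) = n by omega] at this
      rw [this]; unfold DD; split_ifs <;> omega
    · have : j = n := by omega
      subst this
      rw [hXj]; simp [DD]
  have h0 : X 0 = UU i 0 := by
    rw [hX0, hD]; simp [UU]
  have htail : ∀ p, j < p → p ≤ n → j < X p := by
    intro p hp hpn
    have := tail (p - (j + 1)) (by omega)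
    rw [show j + 1 + (p - (j + 1)) = p by omega] at this
    omega
  refine ⟨h0, htail, ?_⟩
  intro p q hpq hqn hp
  by_cases hqj : j < q
  · have := htail q hqj hqn
    omega
  have pers : ∀ r, p + r ≤ j → i < X (p + r) := by
    intro r
    induction r with
    | zero => intro _; exact hp
    | succ r ih =>
      intro h
      have ih := ih (by omega)
      rw [← add_assoc, hX _ (by omega)]
      have n1 : X (p + r) ≠ K := by
        intro h'
        have := hinj (p + r) j (by omega) (by omega) (by rw [h', hXj])
        omega
      have n2 : DD n K (X (p + r)) ≠ j := by
        intro h'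
        have := hinj (p + r + 1) 0 (by omega) (by omega) (by rw [hX _ (by omega), h', hX0, hD])
        omega
      generalize X (p + r) = x at *
      generalize hy : DD n K x = y at *
      generalize hz : UU j y = z at *
      unfold DD at hy
      unfold UU at hz ⊢
      split_ifs at * <;> omega
  have := pers (q - p) (by omega)
  rw [show p + (q - p) = q by omega] at this
  omega

theorem seqB (n i j K : ℕ) (X : ℕ → ℕ) (hij : j < i) (hKi : K ≤ i) (hin : i ≤ n)
    (hX : ∀ p < n, X (p + 1) = UU i (UU j (DD n K (X p))))
    (hX0 : X 0 = UU i (UU j (DD n K (X n))))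
    (hXi : X i = K) (hinj : ∀ p q, p ≤ n → q ≤ n → X p = X q → p = q) :
    X 0 = 0 ∧ (∀ p, i < p → p ≤ n → i < X p) ∧
      (∀ p q, p < q → q ≤ n → j < DD n K (X p) → DD n K (X q) ≠ j) := by
  have tail : ∀ r, i + 1 + r ≤ n → X (i + 1 + r) = n - r := by
    intro r
    induction r with
    | zero =>
      intro h
      rw [add_zero, hX i (by omega), hXi]
      have e1 : DD n K K = n := by simp [DD]
      have e2 : UU j n = n := by unfold UU; split_ifs <;> omega
      have e3 : UU i n = n := by unfold UU; split_ifs <;> omega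
      rw [e1, e2, e3, Nat.sub_zero]
    | succ r ih =>
      intro h
      rw [← add_assoc, hX _ (by omega), ih (by omega)]
      have e1 : DD n K (n - r) = n - (r + 1) := by unfold DD; split_ifs <;> omega
      have e2 : UU j (n - (r + 1)) = n - (r + 1) := by unfold UU; split_ifs <;> omega
      have e3 : UU i (n - (r + 1)) = n - (r + 1) := by unfold UU; split_ifs <;> omega
      rw [e1, e2, e3]
  have hD : DD n K (X n) = i := by
    rcases Nat.lt_or_ge i n with h | h
    · have := tail (n - (i + 1)) (by omega)
      rw [show i + 1 + (n - (i + 1)) = n by omega] at this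
      rw [this]; unfold DD; split_ifs <;> omega
    · have : i = n := by omega
      subst this
      rw [hXi]; simp [DD]
  have h0 : X 0 = 0 := by
    rw [hX0, hD]; unfold UU; split_ifs <;> omega
  have htail : ∀ p, i < p → p ≤ n → i < X p := by
    intro p hp hpn
    have := tail (p - (i + 1)) (by omega)
    rw [show i + 1 + (p - (i + 1)) = p by omega] at this
    omega
  refine ⟨h0, htail, ?_⟩
  intro p q hpq hqn hp
  by_cases hqi : i ≤ q
  · rcases Nat.lt_or_ge i q with h | h
    · have := htail q h hqn
      unfold DD; split_ifs <;> omega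
    · have : q = i := by omega
      subst this
      rw [hXi]
      unfold DD; split_ifs <;> omega
  have pers : ∀ r, p + r < i → j < DD n K (X (p + r)) := by
    intro r
    induction r with
    | zero => intro _; exact hp
    | succ r ih =>
      intro h
      have ih := ih (by omega)
      have n1 : X (p + r + 1) ≠ 0 := by
        intro h'
        have := hinj (p + r + 1) 0 (by omega) (by omega) (by rw [h', h0])
        omega
      rw [← add_assoc]
      have n2 := hX (p + r) (by omega)
      generalize X (p + r + 1) = x' at *
      generalize DD n K (X (p + r)) = y at *
      generalize hz : UU j y = z at *
      unfold DD
      unfold UU at hz n2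
      split_ifs at * <;> omega
  have := pers (q - p) (by omega)
  rw [show p + (q - p) = q by omega] at this
  omega

theorem caseII (n : ℕ) (hn : 1 ≤ n) (i j K : Fin (n + 1)) (w1 w2 w3 : Equiv.Perm (Fin (n + 1)))
    (h1 : ∀ x, ((w1 x : Fin (n + 1)) : ℕ) = UU i x)
    (h2 : ∀ x, ((w2 x : Fin (n + 1)) : ℕ) = UU j x)
    (h3 : ∀ x, ((w3 x : Fin (n + 1)) : ℕ) = DD n K x)
    (hmax : (K : ℕ) ≤ i ∨ (K : ℕ) ≤ j)
    (hc : ∀ x, (w1 * w2 * w3).SameCycle K x) :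
    ∃ v₁ v₂ v₃ : Equiv.Perm (Fin (n + 1)),
      (∀ m, i < m → v₁⁻¹ i < v₁⁻¹ m) ∧
      (∀ m, j < m → v₂⁻¹ j < v₂⁻¹ m) ∧
      (∀ m, m < K → v₃⁻¹ m < v₃⁻¹ K) ∧
      v₃⁻¹ * w1 * v₁ = 1 ∧
      ((v₁⁻¹ * w2 * v₂ = 1 ∧ v₂⁻¹ * w3 * v₃ = wUp n n) ∨
       (v₁⁻¹ * w2 * v₂ = wUp n n ∧ v₂⁻¹ * w3 * v₃ = 1)) := by
  have e1 : w1 i = 0 := by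
    apply Fin.ext; rw [h1]; simp [UU]
  have e2 : w2 j = 0 := by
    apply Fin.ext; rw [h2]; simp [UU]
  have e1' : ∀ m, i < m → w1 m = m := by
    intro m hm
    have hm' : (i : ℕ) < m := hm
    apply Fin.ext; rw [h1]; unfold UU; split_ifs <;> omega
  have hi := i.2
  have hj := j.2
  have hKn := K.2
  have main : ∀ s : Fin (n + 1), ∃ v : Equiv.Perm (Fin (n + 1)),
      ∃ X : ℕ → ℕ, v * wUp n n = w1 * w2 * w3 * v ∧ (∀ p : Fin (n + 1), X p = v p) ∧
      (∀ p < n, X (p + 1) = UU i (UU j (DD n K (X p)))) ∧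
      X 0 = UU i (UU j (DD n K (X n))) ∧ X s = K ∧ v s = K ∧
      (∀ p q, p ≤ n → q ≤ n → X p = X q → p = q) := by
    intro s
    obtain ⟨v, hvs, hv⟩ := exists_rot n hn _ K s hc
    have hw : ∀ x, (((w1 * w2 * w3) x : Fin (n + 1)) : ℕ) = UU i (UU j (DD n K x)) := by
      intro x; rw [Equiv.Perm.mul_apply, Equiv.Perm.mul_apply, h1, h2, h3]
    let X : ℕ → ℕ := fun p => if h : p < n + 1 then ((v ⟨p, h⟩ : Fin (n + 1)) : ℕ) else 0
    have hXv : ∀ p : Fin (n + 1), X p = v p := by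
      intro p; simp only [X]; rw [dif_pos p.2]
    have step : ∀ p q : Fin (n + 1), (q : ℕ) = UU n p → X q = UU i (UU j (DD n K (X p))) := by
      intro p q hpq
      have hq : q = wUp n n p := by
        apply Fin.ext; rw [wUp_val n n le_rfl, hpq]
      rw [hXv, hXv, hq, ← hw, ← Equiv.Perm.mul_apply, hv, Equiv.Perm.mul_apply]
    refine ⟨v, X, hv, hXv, ?_, ?_, ?_, hvs, ?_⟩
    · intro p hp
      exact step ⟨p, by omega⟩ ⟨p + 1, by omega⟩ (by simp [UU, hp])
    · exact step ⟨n, by omega⟩ ⟨0, by omega⟩ (by simp [UU])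
    · rw [hXv, hvs]
    · intro p q hp hq hpq
      have := hXv ⟨p, by omega⟩
      have h' := hXv ⟨q, by omega⟩
      simp only at this h'
      rw [this, h'] at hpq
      have := v.injective (Fin.ext hpq)
      simpa using this
  rcases Nat.lt_or_ge (j : ℕ) i with hji | hij
  · obtain ⟨v, X, hv, hXv, hX, hX0, hXs, hvs, hinj⟩ := main i
    obtain ⟨b1, b2, b3⟩ := seqB n i j K X hji (by omega) (by omega) hX hX0 hXs hinj
    refine ⟨w1⁻¹ * v, w3 * v, v, ?_, ?_, ?_, by group, Or.inr ⟨?_, by group⟩⟩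
    · intro m hm
      simp only [mul_inv_rev, inv_inv, Equiv.Perm.mul_apply, e1, e1' m hm]
      have : v 0 = 0 := by
        apply Fin.ext; rw [← hXv]; exact b1
      have h0 : v⁻¹ 0 = 0 := by rw [Equiv.Perm.inv_eq_iff_eq, this]
      rw [h0, Fin.pos_iff_ne_zero]
      intro h
      rw [Equiv.Perm.inv_eq_iff_eq, this] at h
      subst h
      exact absurd hm (by simp)
    · intro m hm
      simp only [mul_inv_rev, Equiv.Perm.mul_apply]
      by_contra hlt
      have key : ∀ y, DD n K (X (v⁻¹ (w3⁻¹ y) : Fin (n + 1))) = y := by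
        intro y
        rw [hXv, ← h3]; simp
      rcases lt_or_eq_of_le (not_lt.mp hlt) with h | h
      · refine b3 _ _ h (by omega) ?_ (key j)
        rw [key]; exact hm
      · have := w3⁻¹.injective (v⁻¹.injective h)
        exact absurd hm (by simp [this])
    · intro m hm
      have : v⁻¹ K = i := by rw [Equiv.Perm.inv_eq_iff_eq, hvs]
      rw [this]
      by_contra hlt
      have hXm : X (v⁻¹ m : Fin (n + 1)) = m := by rw [hXv]; simp
      have hm' : (m : ℕ) < K := hm
      rcases lt_or_eq_of_le (not_lt.mp hlt) with h | h
      · have := b2 _ h (by omega)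
        omega
      · rw [← h] at hXm; omega
    · calc (w1⁻¹ * v)⁻¹ * w2 * (w3 * v) = v⁻¹ * (w1 * w2 * w3 * v) := by group
        _ = wUp n n := by rw [← hv]; group
  · obtain ⟨v, X, hv, hXv, hX, hX0, hXs, hvs, hinj⟩ := main j
    obtain ⟨b1, b2, b3⟩ := seqA n i j K X hij (by omega) (by omega) hX hX0 hXs hinj
    refine ⟨w1⁻¹ * v, w2⁻¹ * w1⁻¹ * v, v, ?_, ?_, ?_, by group, Or.inl ⟨by group, ?_⟩⟩
    · intro m hm
      simp only [mul_inv_rev, inv_inv, Equiv.Perm.mul_apply, e1, e1' m hm]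
      have key : ∀ y : Fin (n + 1), X (v⁻¹ y : Fin (n + 1)) = y := by
        intro y; rw [hXv]; simp
      by_contra hlt
      rcases lt_or_eq_of_le (not_lt.mp hlt) with h | h
      · refine b3 _ _ h (by omega) ?_ (key 0)
        rw [key]; exact hm
      · have := v⁻¹.injective h
        exact absurd hm (by simp [this])
    · intro m hm
      simp only [mul_inv_rev, inv_inv, Equiv.Perm.mul_apply, e2]
      have : v 0 = w1 0 := by
        apply Fin.ext; rw [← hXv, h1]; exact b1
      have h0 : v⁻¹ (w1 0) = 0 := by rw [Equiv.Perm.inv_eq_iff_eq, this]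
      rw [h0, Fin.pos_iff_ne_zero]
      intro h
      rw [Equiv.Perm.inv_eq_iff_eq, this] at h
      have h := w1.injective h
      rw [← e2] at h
      have := w2.injective h
      exact absurd hm (by simp [this])
    · intro m hm
      have : v⁻¹ K = j := by rw [Equiv.Perm.inv_eq_iff_eq, hvs]
      rw [this]
      by_contra hlt
      have hXm : X (v⁻¹ m : Fin (n + 1)) = m := by rw [hXv]; simp
      have hm' : (m : ℕ) < K := hm
      rcases lt_or_eq_of_le (not_lt.mp hlt) with h | h
      · have := b2 _ h (by omega)
        omega
      · rw [← h] at hXm; omega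
    · calc (w2⁻¹ * w1⁻¹ * v)⁻¹ * w3 * v = v⁻¹ * (w1 * w2 * w3 * v) := by group
        _ = wUp n n := by rw [← hv]; group

theorem stmt8 (n : ℕ) (hn : 1 ≤ n) (i j k : ℕ) (hi : i ≤ n) (hj : j ≤ n)
    (hk1 : 1 ≤ k) (hk2 : k ≤ n + 1) :
    ∃ v₁ v₂ v₃ : Equiv.Perm (Fin (n + 1)),
      (∀ m : Fin (n + 1), i < (m : ℕ) →
        (v₁⁻¹ ⟨i, by omega⟩ : Fin (n + 1)) < v₁⁻¹ m) ∧
      (∀ m : Fin (n + 1), j < (m : ℕ) →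
        (v₂⁻¹ ⟨j, by omega⟩ : Fin (n + 1)) < v₂⁻¹ m) ∧
      (∀ m : Fin (n + 1), (m : ℕ) < k - 1 →
        v₃⁻¹ m < v₃⁻¹ ⟨k - 1, by omega⟩) ∧
      ((∃ t : ℕ, t < n ∧
          v₃⁻¹ * wUp n i * v₁ ∈ Subgroup.closure (genSet n t) ∧
          v₁⁻¹ * wUp n j * v₂ ∈ Subgroup.closure (genSet n t) ∧
          v₂⁻¹ * wDown n k * v₃ ∈ Subgroup.closure (genSet n t)) ∨
        (∃ l₁ l₂ l₃ : List ℕ,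
          l₁.Nodup ∧ l₂.Nodup ∧ l₃.Nodup ∧
          (∀ a ∈ l₁, a < n) ∧ (∀ a ∈ l₂, a < n) ∧ (∀ a ∈ l₃, a < n) ∧
          l₁.Disjoint l₂ ∧ l₁.Disjoint l₃ ∧ l₂.Disjoint l₃ ∧
          v₃⁻¹ * wUp n i * v₁ = (l₁.map (simpleT (n + 1))).prod ∧
          v₁⁻¹ * wUp n j * v₂ = (l₂.map (simpleT (n + 1))).prod ∧
          v₂⁻¹ * wDown n k * v₃ = (l₃.map (simpleT (n + 1))).prod)) := by
  have h1 := wUp_val n i hi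
  have h2 := wUp_val n j hj
  have h3 := wDown_val n k hk1 hk2
  let I : Fin (n + 1) := ⟨i, by omega⟩
  let J : Fin (n + 1) := ⟨j, by omega⟩
  let K : Fin (n + 1) := ⟨k - 1, by omega⟩
  by_cases hmax : (K : ℕ) ≤ I ∨ (K : ℕ) ≤ J
  · by_cases hc : ∀ x, (wUp n i * wUp n j * wDown n k).SameCycle K x
    · obtain ⟨v₁, v₂, v₃, a1, a2, a3, b1, b2⟩ := caseII n hn I J K _ _ _ h1 h2 h3 hmax hc
      refine ⟨v₁, v₂, v₃, fun m hm => a1 m hm, fun m hm => a2 m hm, fun m hm => a3 m hm,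
        Or.inr ?_⟩
      rcases b2 with ⟨b2, b3⟩ | ⟨b2, b3⟩
      · refine ⟨[], [], List.range n, ?_⟩
        rw [b1, b2, b3]
        simp [List.nodup_range, wUp]
      · refine ⟨[], List.range n, [], ?_⟩
        rw [b1, b2, b3]
        simp [List.nodup_range, wUp]
    · obtain ⟨C, c1, c2, c3, c4, c5, c6⟩ := nonCycle n I J K _ _ _ h1 h2 h3 hmax (not_forall.mp hc)
      obtain ⟨v₁, v₂, v₃, a1, a2, a3, b⟩ := caseI n I J K _ _ _ C c1 c2 c3 c4 c5 c6
      exact ⟨v₁, v₂, v₃, fun m hm => a1 m hm, fun m hm => a2 m hm, fun m hm => a3 m hm, Or.inl b⟩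
  · have hmax' : i < k - 1 ∧ j < k - 1 := by
      have : ¬ (k - 1 ≤ i ∨ k - 1 ≤ j) := hmax
      omega
    obtain ⟨v₁, v₂, v₃, a1, a2, a3, b⟩ := caseI n I J K (wUp n i) (wUp n j) (wDown n k)
      (Finset.univ.filter (fun x => (x : ℕ) < k - 1)) (by
        intro x
        simp only [Finset.mem_filter, Finset.mem_univ, true_and, h1, h2, h3]
        have := x.2
        generalize hy : DD n (k - 1) x = y
        generalize hz : UU j y = z
        unfold DD at hy
        unfold UU at hz ⊢
        split_ifs at * <;> omega)
      ⟨I, by simpa [I] using hmax'.1⟩ ⟨K, by simp [K]⟩ (by simp [K])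
      (by
        intro x _ _
        simp only [Finset.mem_filter, Finset.mem_univ, true_and]
        have := h3 ((wDown n k).symm J)
        rw [Equiv.apply_symm_apply] at this
        have hJ : (J : ℕ) = j := rfl
        rw [hJ] at this
        have := ((wDown n k).symm J).2
        unfold DD at *
        split_ifs at * <;> omega)
      (by
        intro m _ _
        simp only [Finset.mem_filter, Finset.mem_univ, true_and, h1]
        have hI : (I : ℕ) = i := rfl
        rw [hI]
        unfold UU
        split_ifs <;> omega)
    exact ⟨v₁, v₂, v₃, fun m hm => a1 m hm, fun m hm => a2 m hm, fun m hm => a3 m hm, Or.inl b⟩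
end

section
/- Let n ≥ 2, let μ ∈ ℤⁿ be weakly decreasing, and let x = (w, λ) with w ∈ Sₙ and λ ∈ ℤⁿ be μ-permissible. Then ℓ(x) ≤ ⟨μ, 2ρ⟩ − ℓ_R(w), where ℓ(x) := Σ_{1≤a<b≤n} |ℓ(x, e_a − e_b)| is the Iwahori–Matsumoto length of x, ⟨μ, 2ρ⟩ := Σ_{1≤a<b≤n} (μ_a − μ_b) = Σ_{a=1}^{n} (n+1−2a) μ_a, and ℓ_R(w) is the reflection length of w. -/
/-- The length functional of `x = (w, λ)`: the value `ℓ(x, e_a − e_b)`. -/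
def ellF {n : ℕ} (w : Equiv.Perm (Fin n)) (lam : Fin n → ℤ) (a b : Fin n) : ℤ :=
  lam a - lam b +
    (if a < b ∧ w b < w a then 1 else if b < a ∧ w a < w b then -1 else 0)

/-- The vector `μ^{(i)}(x) = λ + 1_{[1..i]} − w⁻¹·1_{[1..i]}` for `x = (w, λ)`. -/
def muI {n : ℕ} (w : Equiv.Perm (Fin n)) (lam : Fin n → ℤ) (i : ℕ) : Fin n → ℤ :=
  fun a => lam a + (if (a : ℕ) < i then 1 else 0) - (if ((w a : Fin n) : ℕ) < i then 1 else 0)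

/-- `x = (w, λ)` is `μ`-permissible. -/
def Permissible {n : ℕ} (μ : Fin n → ℤ) (w : Equiv.Perm (Fin n)) (lam : Fin n → ℤ) : Prop :=
  (∑ a, lam a = ∑ a, μ a) ∧
  ∀ i : ℕ, 1 ≤ i → i ≤ n →
    ∀ (ρ : Fin n → ℤ) (π : Equiv.Perm (Fin n)),
      (∀ a, ρ a = muI w lam i (π a)) → Antitone ρ →
      ∀ j : ℕ, psum ρ j ≤ psum μ j

/-- The reflection length of a permutation: the minimal number of transpositions
whose product is `w`. -/
noncomputable def reflLength {n : ℕ} (w : Equiv.Perm (Fin n)) : ℕ :=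
  sInf {k | ∃ l : List (Equiv.Perm (Fin n)),
    (∀ τ ∈ l, τ.IsSwap) ∧ l.length = k ∧ l.prod = w}

open Finset

def rk {n : ℕ} (p : Equiv.Perm (Fin n)) (j k : ℕ) : ℤ :=
  ∑ c : Fin n, if (c : ℕ) < k ∧ (p c : ℕ) < j then 1 else 0

def invN {n : ℕ} (p : Equiv.Perm (Fin n)) : ℤ :=
  ∑ x : Fin n, ∑ y : Fin n, if x < y ∧ p y < p x then 1 else 0

/-! Reflection length -/

theorem reflLength_le_of_list {n : ℕ} (l : List (Equiv.Perm (Fin n)))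
    (h : ∀ τ ∈ l, τ.IsSwap) : reflLength l.prod ≤ l.length :=
  Nat.sInf_le ⟨l, h, rfl, rfl⟩

theorem reflLength_spec {n : ℕ} (w : Equiv.Perm (Fin n)) :
    ∃ l : List (Equiv.Perm (Fin n)), (∀ τ ∈ l, τ.IsSwap) ∧ l.length = reflLength w ∧ l.prod = w := by
  have : {k | ∃ l : List (Equiv.Perm (Fin n)),
    (∀ τ ∈ l, τ.IsSwap) ∧ l.length = k ∧ l.prod = w}.Nonempty := by
    obtain ⟨l, h1, h2⟩ := (Equiv.Perm.truncSwapFactors w).out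
    exact ⟨_, l, h2, rfl, h1⟩
  exact Nat.sInf_mem this

theorem reflLength_one {n : ℕ} : reflLength (1 : Equiv.Perm (Fin n)) = 0 := by
  have := reflLength_le_of_list (n := n) [] (by simp)
  simpa using this

theorem reflLength_swap_mul {n : ℕ} (w : Equiv.Perm (Fin n)) (a b : Fin n) (hab : a ≠ b) :
    reflLength (Equiv.swap a b * w) ≤ reflLength w + 1 := by
  obtain ⟨l, h1, h2, h3⟩ := reflLength_spec w
  have := reflLength_le_of_list (Equiv.swap a b :: l) (by
    intro τ hτ
    rcases List.mem_cons.1 hτ with h | h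
    · exact h ▸ ⟨a, b, hab, rfl⟩
    · exact h1 τ h)
  simpa [h2, h3] using this

theorem reflLength_conj {n : ℕ} (w s : Equiv.Perm (Fin n)) :
    reflLength (s * w * s⁻¹) ≤ reflLength w := by
  obtain ⟨l, h1, h2, h3⟩ := reflLength_spec w
  have := reflLength_le_of_list (l.map (MulAut.conj s)) (by
    intro τ hτ
    obtain ⟨t, ht, rfl⟩ := List.mem_map.1 hτ
    obtain ⟨x, y, hxy, rfl⟩ := h1 t ht
    refine ⟨s x, s y, by simpa using hxy, ?_⟩
    rw [MulAut.conj_apply, Equiv.swap_apply_apply])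
  rw [← map_list_prod, h3, MulAut.conj_apply] at this
  simpa [h2] using this

theorem reflLength_mul_swap {n : ℕ} (w : Equiv.Perm (Fin n)) (a b : Fin n) (hab : a ≠ b) :
    reflLength (w * Equiv.swap a b) ≤ reflLength w + 1 := by
  have h := reflLength_swap_mul w (w a) (w b) (by simpa using hab)
  rwa [Equiv.swap_apply_apply, inv_mul_cancel_right] at h

/-! Inversions -/

theorem sum_split {n : ℕ} (F : Fin n → ℤ) (a b : Fin n) (hab : a ≠ b) :
    ∑ x, F x = F a + F b + ∑ x ∈ (univ.erase a).erase b, F x := by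
  rw [← add_sum_erase univ F (mem_univ a),
    ← add_sum_erase (univ.erase a) F (a := b) (by simp [hab.symm])]
  ring

theorem inv_swap {n : ℕ} (p : Equiv.Perm (Fin n)) (a b : Fin n) (hab : a < b) (h : p b < p a) :
    invN p = invN (p * Equiv.swap a b) + 1 +
      2 * ∑ m : Fin n, if a < m ∧ m < b ∧ p b < p m ∧ p m < p a then 1 else 0 := by
  have hne : a ≠ b := ne_of_lt hab
  have h1 : invN (p * Equiv.swap a b) = ∑ x : Fin n, ∑ y : Fin n,
      if Equiv.swap a b x < Equiv.swap a b y ∧ p y < p x then (1:ℤ) else 0 := by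
    unfold invN
    rw [← Equiv.sum_comp (Equiv.swap a b)]
    refine sum_congr rfl fun x _ => ?_
    rw [← Equiv.sum_comp (Equiv.swap a b)]
    refine sum_congr rfl fun y _ => ?_
    simp
  have h2 : invN p - invN (p * Equiv.swap a b) = ∑ x : Fin n, ∑ y : Fin n,
      ((if x < y ∧ p y < p x then (1:ℤ) else 0) -
      if Equiv.swap a b x < Equiv.swap a b y ∧ p y < p x then (1:ℤ) else 0) := by
    rw [h1]; simp only [sum_sub_distrib]; rfl
  set G : Fin n → Fin n → ℤ := fun x y => ((if x < y ∧ p y < p x then (1:ℤ) else 0) -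
      if Equiv.swap a b x < Equiv.swap a b y ∧ p y < p x then (1:ℤ) else 0) with hG
  have h3 : invN p - invN (p * Equiv.swap a b) = ∑ x, ∑ y, G x y := h2
  have h4 : ∑ x, ∑ y, G x y = G a a + G a b + G b a + G b b +
      ∑ m ∈ (univ.erase a).erase b, (G a m + G b m + G m a + G m b) := by
    rw [sum_split _ a b hne, sum_split (G a) a b hne, sum_split (G b) a b hne]
    have : ∑ x ∈ (univ.erase a).erase b, ∑ y, G x y =
        ∑ x ∈ (univ.erase a).erase b, (G x a + G x b) := by
      refine sum_congr rfl fun x hx => ?_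
      rw [sum_split (G x) a b hne, add_eq_left]
      refine sum_eq_zero fun y hy => ?_
      simp only [mem_erase, mem_univ, and_true] at hx hy
      simp only [hG, Equiv.swap_apply_of_ne_of_ne hx.2 hx.1, Equiv.swap_apply_of_ne_of_ne hy.2 hy.1,
        sub_self]
    rw [this]
    simp only [sum_add_distrib]
    ring
  have h5 : G a a + G a b + G b a + G b b = 1 := by
    simp [hG, hab, h, not_lt_of_gt hab, not_lt_of_gt h]
  have h6 : (2:ℤ) * ∑ m : Fin n, (if a < m ∧ m < b ∧ p b < p m ∧ p m < p a then (1:ℤ) else 0) =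
      ∑ m ∈ (univ.erase a).erase b, (G a m + G b m + G m a + G m b) := by
    rw [sum_split _ a b hne, mul_add, mul_sum]
    simp only [lt_self_iff_false, false_and, and_false, if_false]
    simp only [add_zero, mul_zero, zero_add]
    refine sum_congr rfl fun m hm => ?_
    simp only [mem_erase, mem_univ, and_true] at hm
    have e1 : p m ≠ p a := fun e => hm.2 (p.injective e)
    have e2 : p m ≠ p b := fun e => hm.1 (p.injective e)
    simp only [hG, Equiv.swap_apply_of_ne_of_ne hm.2 hm.1, Equiv.swap_apply_left,
      Equiv.swap_apply_right]
    have e3 := hm.1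
    have e4 := hm.2
    split_ifs <;> omega
  linarith

theorem invN_inv {n : ℕ} (p : Equiv.Perm (Fin n)) : invN p⁻¹ = invN p := by
  unfold invN
  rw [← Equiv.sum_comp p, sum_comm, ← Equiv.sum_comp p, sum_comm]
  rw [sum_comm]
  refine sum_congr rfl fun x _ => sum_congr rfl fun y _ => ?_
  simp [and_comm]

theorem invN_nonneg {n : ℕ} (p : Equiv.Perm (Fin n)) : 0 ≤ invN p :=
  sum_nonneg fun _ _ => sum_nonneg fun _ _ => by split_ifs <;> simp

/-! Diaconis–Graham -/

theorem dg {n : ℕ} (m : ℕ) : ∀ q : Equiv.Perm (Fin n), (∀ c : Fin n, m ≤ (c : ℕ) → q c = c) →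
    invN q + reflLength q⁻¹ ≤ ∑ c, |((q c : ℕ) : ℤ) - ((c : ℕ) : ℤ)| := by
  induction m with
  | zero =>
    intro q hq
    have : q = 1 := by ext c; simp [hq c]
    subst this
    have : invN (1 : Equiv.Perm (Fin n)) = 0 := by
      unfold invN
      refine sum_eq_zero fun x _ => sum_eq_zero fun y _ => ?_
      rw [if_neg]
      simp only [Equiv.Perm.one_apply]
      omega
    simp [this, reflLength_one]
  | succ m ih =>
    intro q hq
    by_cases hm : ∃ b : Fin n, (b : ℕ) = m ∧ q b ≠ b
    swap
    · apply ih
      intro c hc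
      by_contra hne
      rcases Nat.eq_or_lt_of_le hc with h | h
      · exact hm ⟨c, h.symm, hne⟩
      · exact hne (hq c h)
    obtain ⟨b, hb, hqb⟩ := hm
    -- values at most `m` on positions at most `m`
    have hle : ∀ c : Fin n, (c : ℕ) ≤ m → (q c : ℕ) ≤ m := by
      intro c hc
      by_contra hlt
      have := hq (q c) (by omega)
      have := q.injective this
      rw [this] at hlt
      omega
    set a := q⁻¹ b with ha
    have hqa : q a = b := by simp [ha]
    have hane : a ≠ b := by
      intro e; rw [e] at hqa; exact hqb hqa
    have ham : (a : ℕ) ≤ m := by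
      by_contra hlt
      have := hq a (by omega)
      rw [hqa] at this
      exact hane this.symm
    have hab : a < b := by
      have : (a : ℕ) ≠ b := fun e => hane (Fin.ext e)
      exact Fin.lt_def.2 (by omega)
    have hqbm := hle b hb.le
    have hlt : q b < q a := by
      rw [hqa]
      have : (q b : ℕ) ≠ b := fun e => hqb (Fin.ext e)
      exact Fin.lt_def.2 (by omega)
    have hinv := inv_swap q a b hab hlt
    set q' := q * Equiv.swap a b with hq'
    have hfix : ∀ c : Fin n, m ≤ (c : ℕ) → q' c = c := by
      intro c hc
      by_cases hcb : c = b
      · subst hcb; simp [hq', hqa]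
      · have : c ≠ a := fun e => by
          subst e; have := Fin.lt_def.1 hab; omega
        have h2 : (c : ℕ) ≠ b := fun e => hcb (Fin.ext e)
        rw [hq', Equiv.Perm.mul_apply, Equiv.swap_apply_of_ne_of_ne this hcb]
        exact hq c (by omega)
    have hI := ih q' hfix
    have hR : reflLength q⁻¹ ≤ reflLength q'⁻¹ + 1 := by
      have := reflLength_swap_mul q'⁻¹ a b hane
      have e : Equiv.swap a b * q'⁻¹ = q⁻¹ := by
        rw [hq', mul_inv_rev, Equiv.swap_inv, Equiv.swap_mul_self_mul]
      rwa [e] at this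
    have hD : ∑ c, |((q c : ℕ) : ℤ) - ((c : ℕ) : ℤ)| - ∑ c, |((q' c : ℕ) : ℤ) - ((c : ℕ) : ℤ)|
        = 2 * ((b : ℕ) - max ((q b : ℕ) : ℤ) ((a : ℕ) : ℤ)) := by
      rw [sum_split _ a b hane, sum_split (fun c => |((q' c : ℕ) : ℤ) - ((c : ℕ) : ℤ)|) a b hane]
      have : ∑ c ∈ (univ.erase a).erase b, |((q c : ℕ) : ℤ) - ((c : ℕ) : ℤ)| =
          ∑ c ∈ (univ.erase a).erase b, |((q' c : ℕ) : ℤ) - ((c : ℕ) : ℤ)| := by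
        refine sum_congr rfl fun c hc => ?_
        simp only [mem_erase, mem_univ, and_true] at hc
        rw [hq', Equiv.Perm.mul_apply, Equiv.swap_apply_of_ne_of_ne hc.2 hc.1]
      rw [this]
      have e1 : q' a = q b := by simp [hq']
      have e2 : q' b = b := by simp [hq', hqa]
      rw [e1, e2, hqa]
      have := Fin.lt_def.1 hab
      have h3 := Fin.lt_def.1 hlt
      rw [hqa] at h3
      simp only [sub_self, abs_zero]
      rw [abs_of_nonneg (by omega : (0:ℤ) ≤ ((b : ℕ) : ℤ) - ((a : ℕ) : ℤ)),
        abs_of_nonpos (by omega : ((q b : ℕ) : ℤ) - ((b : ℕ) : ℤ) ≤ 0)]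
      rcases le_total ((q b : ℕ) : ℤ) ((a : ℕ) : ℤ) with h | h
      · rw [max_eq_right h, abs_of_nonpos (by omega)]; ring
      · rw [max_eq_left h, abs_of_nonneg (by omega)]; ring
    have hS : (∑ m : Fin n, if a < m ∧ m < b ∧ q b < q m ∧ q m < q a then (1:ℤ) else 0) ≤
        (b : ℕ) - max ((q b : ℕ) : ℤ) ((a : ℕ) : ℤ) - 1 := by
      have h3 := Fin.lt_def.1 hlt
      rw [hqa] at h3
      have h4 := Fin.lt_def.1 hab
      have c1 : (∑ m : Fin n, if a < m ∧ m < b ∧ q b < q m ∧ q m < q a then (1:ℤ) else 0) ≤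
          (b : ℕ) - ((a : ℕ) : ℤ) - 1 := by
        rw [sum_boole]
        have : (univ.filter fun m : Fin n => a < m ∧ m < b ∧ q b < q m ∧ q m < q a).card ≤
            (Finset.Ioo a b).card := by
          apply card_le_card
          intro x hx
          simp only [mem_filter, mem_univ, true_and] at hx
          exact mem_Ioo.2 ⟨hx.1, hx.2.1⟩
        rw [Fin.card_Ioo] at this
        omega
      have c2 : (∑ m : Fin n, if a < m ∧ m < b ∧ q b < q m ∧ q m < q a then (1:ℤ) else 0) ≤
          (b : ℕ) - ((q b : ℕ) : ℤ) - 1 := by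
        rw [sum_boole]
        have : (univ.filter fun m : Fin n => a < m ∧ m < b ∧ q b < q m ∧ q m < q a).card ≤
            (Finset.Ioo (q b) (q a)).card := by
          apply card_le_card_of_injOn q
          · intro x hx
            simp only [coe_filter, mem_univ, true_and, Set.mem_ofPred_eq] at hx
            simp only [coe_Ioo, Set.mem_Ioo]
            exact hx.2.2
          · exact q.injective.injOn
        rw [Fin.card_Ioo] at this
        have h7 : (q a : ℕ) = b := by rw [hqa]
        omega
      rcases le_total ((q b : ℕ) : ℤ) ((a : ℕ) : ℤ) with h | h
      · rw [max_eq_right h]; exact c1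
      · rw [max_eq_left h]; exact c2
    have hR' : ((reflLength q⁻¹ : ℕ) : ℤ) ≤ reflLength q'⁻¹ + 1 := by exact_mod_cast hR
    linarith

/-! Rank functions -/

theorem rk_succ {n : ℕ} (p : Equiv.Perm (Fin n)) (j : ℕ) (c : Fin n) :
    rk p j (c + 1) = rk p j c + if (p c : ℕ) < j then 1 else 0 := by
  have : (if (p c : ℕ) < j then (1:ℤ) else 0) =
      ∑ x : Fin n, if x = c then (if (p x : ℕ) < j then (1:ℤ) else 0) else 0 := by simp
  unfold rk
  rw [this, ← sum_add_distrib]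
  refine sum_congr rfl fun x _ => ?_
  have : x = c ↔ (x : ℕ) = c := Fin.ext_iff
  simp only [this]
  split_ifs <;> omega

theorem rk_swap {n : ℕ} (p : Equiv.Perm (Fin n)) (j k : ℕ) (a b : Fin n)
    (hab : (b : ℕ) = a + 1) (hk : k ≠ b) : rk (p * Equiv.swap a b) j k = rk p j k := by
  unfold rk
  rw [← Equiv.sum_comp (Equiv.swap a b)]
  refine sum_congr rfl fun x _ => ?_
  simp only [Equiv.Perm.mul_apply, Equiv.swap_apply_self]
  have : ((Equiv.swap a b x : Fin n) : ℕ) < k ↔ (x : ℕ) < k := by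
    rcases eq_or_ne x a with h | h
    · subst h; rw [Equiv.swap_apply_left]; omega
    rcases eq_or_ne x b with h' | h'
    · subst h'; rw [Equiv.swap_apply_right]; omega
    rw [Equiv.swap_apply_of_ne_of_ne h h']
  simp only [this]

theorem rk_swap_mid {n : ℕ} (p : Equiv.Perm (Fin n)) (j : ℕ) (a b : Fin n)
    (hab : (b : ℕ) = a + 1) :
    rk (p * Equiv.swap a b) j b = rk p j a + if (p b : ℕ) < j then 1 else 0 := by
  have h := rk_succ (p * Equiv.swap a b) j a
  rw [← hab, rk_swap p j a a b hab (by omega)] at h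
  simpa using h

theorem inv_adj {n : ℕ} (p : Equiv.Perm (Fin n)) (a b : Fin n)
    (hab : (b : ℕ) = a + 1) (h : p b < p a) : invN p = invN (p * Equiv.swap a b) + 1 := by
  rw [inv_swap p a b (Fin.lt_def.2 (by omega)) h, add_eq_left, mul_eq_zero]
  right
  refine sum_eq_zero fun m _ => ?_
  rw [if_neg]
  rintro ⟨h1, h2, -⟩
  have := Fin.lt_def.1 h1
  have := Fin.lt_def.1 h2
  omega

theorem base_case {n : ℕ} (q : Equiv.Perm (Fin n)) (D : ℕ → ℤ)
    (hD : ∀ j k, k ≤ n → rk (1 : Equiv.Perm (Fin n)) j k - rk q j k ≤ D j) :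
    invN q + reflLength q⁻¹ ≤ 2 * ∑ j ∈ range n, D j := by
  have h1 := dg n q (fun c hc => absurd c.2 (by omega))
  have h2 : ∀ j ∈ range n, (∑ c : Fin n, if (c : ℕ) < j ∧ j ≤ (q c : ℕ) then (1:ℤ) else 0) ≤ D j := by
    intro j hj
    refine le_trans (le_of_eq ?_) (hD j j (mem_range.1 hj).le)
    unfold rk
    rw [← sum_sub_distrib]
    refine sum_congr rfl fun c _ => ?_
    simp only [Equiv.Perm.one_apply]
    split_ifs <;> omega
  have h3 := sum_le_sum h2
  rw [sum_comm] at h3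
  have h4 : ∀ c : Fin n, (∑ j ∈ range n, if (c : ℕ) < j ∧ j ≤ (q c : ℕ) then (1:ℤ) else 0) =
      max (((q c : ℕ) : ℤ) - ((c : ℕ) : ℤ)) 0 := by
    intro c
    rw [sum_boole]
    have : (range n).filter (fun j => (c : ℕ) < j ∧ j ≤ (q c : ℕ)) = Finset.Ioc (c : ℕ) (q c) := by
      ext x
      simp only [mem_filter, mem_range, mem_Ioc]
      have := (q c).2
      omega
    rw [this, Nat.card_Ioc]
    omega
  simp only [h4] at h3
  have h5 : ∑ c : Fin n, (((q c : ℕ) : ℤ) - ((c : ℕ) : ℤ)) = 0 := by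
    rw [sum_sub_distrib, Equiv.sum_comp q (fun c => ((c : ℕ) : ℤ)), sub_self]
  have h6 : ∑ c : Fin n, |((q c : ℕ) : ℤ) - ((c : ℕ) : ℤ)| =
      2 * ∑ c : Fin n, max (((q c : ℕ) : ℤ) - ((c : ℕ) : ℤ)) 0 -
        ∑ c : Fin n, (((q c : ℕ) : ℤ) - ((c : ℕ) : ℤ)) := by
    rw [mul_sum, ← sum_sub_distrib]
    refine sum_congr rfl fun c _ => ?_
    rcases le_total (((q c : ℕ) : ℤ) - ((c : ℕ) : ℤ)) 0 with h | h
    · rw [max_eq_right h, abs_of_nonpos h]; ring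
    · rw [max_eq_left h, abs_of_nonneg h]; ring
  linarith

theorem exists_descent {n : ℕ} (p : Equiv.Perm (Fin n)) (hp : p ≠ 1) :
    ∃ a b : Fin n, (b : ℕ) = a + 1 ∧ p b < p a := by
  by_contra hcon
  push Not at hcon
  apply hp
  have hmono : StrictMono p := by
    have key : ∀ d : ℕ, ∀ x y : Fin n, (y : ℕ) = x + d → p x ≤ p y := by
      intro d
      induction d with
      | zero => intro x y h; rw [Fin.ext (show (y : ℕ) = x by omega)]
      | succ d ih =>
        intro x y h
        have hy := y.2
        let z : Fin n := ⟨x + d, by omega⟩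
        exact (ih x z rfl).trans (hcon z y (by simp [z]; omega))
    have : Monotone p := fun x y h => key (y - x) x y (by have := Fin.le_def.1 h; omega)
    exact this.strictMono_of_injective p.injective
  have : (p : Fin n → Fin n) = id :=
    StrictMono.range_inj hmono strictMono_id |>.1 (by simp [p.surjective.range_eq])
  ext x
  simp [this]

theorem key_ineq {n : ℕ} (D : ℕ → ℤ) (N : ℕ) : ∀ p q : Equiv.Perm (Fin n), invN p ≤ N →
    (∀ j k, k ≤ n → rk p j k - rk q j k ≤ D j) →
    (reflLength (q⁻¹ * p) : ℤ) ≤ 2 * ∑ j ∈ range n, D j + invN p - invN q := by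
  induction N with
  | zero =>
    intro p q hp hD
    by_cases h1 : p = 1
    · subst h1
      have := base_case q D hD
      have := invN_nonneg (1 : Equiv.Perm (Fin n))
      rw [mul_one]
      linarith
    · obtain ⟨a, b, hab, hlt⟩ := exists_descent p h1
      have h2 := inv_adj p a b hab hlt
      have h3 := invN_nonneg (p * Equiv.swap a b)
      push_cast at hp
      omega
  | succ N ih =>
    intro p q hp hD
    by_cases h1 : p = 1
    · subst h1
      have := base_case q D hD
      have := invN_nonneg (1 : Equiv.Perm (Fin n))
      rw [mul_one]
      linarith
    obtain ⟨a, b, hab, hlt⟩ := exists_descent p h1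
    have hane : a ≠ b := fun e => by subst e; omega
    have h2 := inv_adj p a b hab hlt
    have hb2 := b.2
    have hlt' := Fin.lt_def.1 hlt
    push_cast at hp
    have hpa : ∀ j, rk p j b = rk p j a + if (p a : ℕ) < j then 1 else 0 := fun j => by
      rw [hab]; exact rk_succ p j a
    have hqa : ∀ j, rk q j b = rk q j a + if (q a : ℕ) < j then 1 else 0 := fun j => by
      rw [hab]; exact rk_succ q j a
    by_cases hq : q b < q a
    · have h3 := inv_adj q a b hab hq
      have hq' := Fin.lt_def.1 hq
      have := ih (p * Equiv.swap a b) (q * Equiv.swap a b) (by omega) (by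
        intro j k hk
        by_cases hkb : k = b
        · subst hkb
          have t1 := hD j a (by omega)
          have t2 := hD j (b + 1) (by omega)
          rw [rk_succ, rk_succ, hpa, hqa] at t2
          rw [rk_swap_mid p j a b hab, rk_swap_mid q j a b hab]
          split_ifs at * <;> omega
        · rw [rk_swap p j k a b hab hkb, rk_swap q j k a b hab hkb]
          exact hD j k hk)
      have h5 := reflLength_conj ((q * Equiv.swap a b)⁻¹ * (p * Equiv.swap a b)) (Equiv.swap a b)
      have e : Equiv.swap a b * ((q * Equiv.swap a b)⁻¹ * (p * Equiv.swap a b)) * (Equiv.swap a b)⁻¹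
          = q⁻¹ * p := by group
      rw [e] at h5
      have h6 : ((reflLength (q⁻¹ * p) : ℕ) : ℤ) ≤
        reflLength ((q * Equiv.swap a b)⁻¹ * (p * Equiv.swap a b)) := by exact_mod_cast h5
      linarith
    · have hq' : (q a : ℕ) < q b := by
        have : q a ≠ q b := fun e => hane (q.injective e)
        have := lt_of_le_of_ne (not_lt.1 hq) this
        exact Fin.lt_def.1 this
      have := ih (p * Equiv.swap a b) q (by omega) (by
        intro j k hk
        by_cases hkb : k = b
        · subst hkb
          have t1 := hD j a (by omega)
          have t2 := hD j (b + 1) (by omega)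
          rw [rk_succ, rk_succ, hpa, hqa] at t2
          rw [rk_swap_mid p j a b hab, hqa]
          split_ifs at * <;> omega
        · rw [rk_swap p j k a b hab hkb]
          exact hD j k hk)
      have h5 := reflLength_mul_swap (q⁻¹ * (p * Equiv.swap a b)) a b hane
      have e : q⁻¹ * (p * Equiv.swap a b) * Equiv.swap a b = q⁻¹ * p := by
        rw [← mul_assoc, Equiv.mul_swap_mul_self]
      rw [e] at h5
      have h6 : ((reflLength (q⁻¹ * p) : ℕ) : ℤ) ≤
        reflLength (q⁻¹ * (p * Equiv.swap a b)) + 1 := by exact_mod_cast h5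
      linarith

/-! Sums over pairs -/

theorem psum_eq {n : ℕ} (f : Fin n → ℤ) (j : ℕ) :
    psum f j = ∑ a : Fin n, if (a : ℕ) < j then f a else 0 := by
  unfold psum; rw [sum_filter]

theorem pair_sum {n : ℕ} (g : Fin n → Fin n → ℤ) :
    ∑ p ∈ univ.filter (fun p : Fin n × Fin n => p.1 < p.2), g p.1 p.2 =
      ∑ a, ∑ b, if a < b then g a b else 0 := by
  rw [sum_filter, Fintype.sum_prod_type]

theorem sum_diff {n : ℕ} (f : Fin n → ℤ) :
    (∑ a, ∑ b, if a < b then f a - f b else 0) =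
      2 * ∑ j ∈ range n, psum f j - (n - 1) * ∑ a, f a := by
  have h1 : (∑ a, ∑ b, if a < b then f a - f b else 0) =
      (∑ a : Fin n, ∑ b : Fin n, if a < b then f a else 0) -
      ∑ a : Fin n, ∑ b : Fin n, if a < b then f b else 0 := by
    simp only [← sum_sub_distrib]
    refine sum_congr rfl fun a _ => sum_congr rfl fun b _ => ?_
    split_ifs <;> simp
  have h2 : (∑ a : Fin n, ∑ b : Fin n, if a < b then f a else 0) =
      ∑ a : Fin n, ((n:ℤ) - 1 - ((a : ℕ) : ℤ)) * f a := by
    refine sum_congr rfl fun a _ => ?_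
    rw [← sum_filter, sum_const, nsmul_eq_mul]
    have : univ.filter (fun b => a < b) = Finset.Ioi a := by ext; simp
    rw [this, Fin.card_Ioi]
    have := a.2
    congr 1; omega
  have h3 : (∑ a : Fin n, ∑ b : Fin n, if a < b then f b else 0) =
      ∑ a : Fin n, ((a : ℕ) : ℤ) * f a := by
    rw [sum_comm]
    refine sum_congr rfl fun a _ => ?_
    rw [← sum_filter, sum_const, nsmul_eq_mul]
    have : univ.filter (fun b => b < a) = Finset.Iio a := by ext; simp
    rw [this, Fin.card_Iio]
  have h4 : ∑ j ∈ range n, psum f j = ∑ a : Fin n, ((n:ℤ) - 1 - ((a : ℕ) : ℤ)) * f a := by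
    simp only [psum_eq]
    rw [sum_comm]
    refine sum_congr rfl fun a _ => ?_
    rw [← sum_filter, sum_const, nsmul_eq_mul]
    have : (range n).filter (fun j => (a : ℕ) < j) = Finset.Ioo (a : ℕ) n := by
      ext; simp [and_comm]
    rw [this, Nat.card_Ioo]
    have := a.2
    congr 1; omega
  rw [h1, h2, h3, h4, mul_sum, mul_sum, ← sum_sub_distrib, ← sum_sub_distrib]
  refine sum_congr rfl fun a _ => ?_
  ring

theorem sym_sum {n : ℕ} (g : Fin n → Fin n → ℤ) (hs : ∀ a b, g a b = g b a) (h0 : ∀ a, g a a = 0) :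
    2 * (∑ a, ∑ b, if a < b then g a b else 0) = ∑ a, ∑ b, g a b := by
  have h : (∑ a, ∑ b, if a < b then g a b else 0) = ∑ a, ∑ b, if b < a then g a b else 0 := by
    rw [sum_comm]
    refine sum_congr rfl fun a _ => sum_congr rfl fun b _ => ?_
    rw [hs]
  rw [two_mul]
  nth_rewrite 2 [h]
  simp only [← sum_add_distrib]
  refine sum_congr rfl fun a _ => sum_congr rfl fun b _ => ?_
  rcases lt_trichotomy a b with h | h | h
  · simp [h, not_lt_of_gt h]
  · subst h; simp [h0]
  · simp [h, not_lt_of_gt h]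

theorem sym_sum_perm {n : ℕ} (g : Fin n → Fin n → ℤ) (hs : ∀ a b, g a b = g b a)
    (h0 : ∀ a, g a a = 0) (v : Equiv.Perm (Fin n)) :
    (∑ a, ∑ b, if a < b then g a b else 0) = ∑ a, ∑ b, if a < b then g (v a) (v b) else 0 := by
  have h1 := sym_sum g hs h0
  have h2 := sym_sum (fun a b => g (v a) (v b)) (fun a b => hs _ _) (fun a => h0 _)
  have h3 : ∑ a, ∑ b, g (v a) (v b) = ∑ a, ∑ b, g a b := by
    rw [← Equiv.sum_comp v (fun a => ∑ b, g a b)]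
    exact sum_congr rfl fun a _ => Equiv.sum_comp v (fun b => g (v a) b)
  linarith

theorem ellF_neg {n : ℕ} (w : Equiv.Perm (Fin n)) (lam : Fin n → ℤ) (a b : Fin n) :
    ellF w lam b a = - ellF w lam a b := by
  unfold ellF
  split_ifs <;> omega

theorem psum_perm_le {n : ℕ} (ρ : Fin n → ℤ) (hρ : Antitone ρ) (σ : Equiv.Perm (Fin n)) (j : ℕ) :
    psum (fun a => ρ (σ a)) j ≤ psum ρ j := by
  have hf : Antitone (fun a : Fin n => if (a : ℕ) < j then (1:ℤ) else 0) := by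
    intro a b h
    have := Fin.le_def.1 h
    dsimp only
    split_ifs <;> omega
  have := (hf.monovary hρ).sum_mul_comp_perm_le_sum_mul (σ := σ)
  simpa [psum_eq] using this

theorem perm_bound {n : ℕ} (μ : Fin n → ℤ) (w : Equiv.Perm (Fin n)) (lam : Fin n → ℤ)
    (hperm : Permissible μ w lam) (v : Equiv.Perm (Fin n)) (i j : ℕ) (hi : 1 ≤ i) (hin : i ≤ n) :
    psum (fun a => muI w lam i (v a)) j ≤ psum μ j := by
  let π := Tuple.sort (fun a => - muI w lam i a)
  have hπ : Antitone (fun a => muI w lam i (π a)) := by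
    intro a b h
    have := Tuple.monotone_sort (fun a => - muI w lam i a) h
    simp only [Function.comp] at this
    exact neg_le_neg_iff.1 this
  have h1 := hperm.2 i hi hin (fun a => muI w lam i (π a)) π (fun _ => rfl) hπ j
  have h2 := psum_perm_le _ hπ (π⁻¹ * v) j
  have e : ∀ a, π ((π⁻¹ * v) a) = v a := fun a => by simp
  simp only [e] at h2
  exact h2.trans h1

theorem exists_sort_s15 {n : ℕ} (lam : Fin n → ℤ) : ∃ v : Equiv.Perm (Fin n),
    ∀ a b, a < b → lam (v b) < lam (v a) ∨ (lam (v a) = lam (v b) ∧ v a < v b) := by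
  refine ⟨Tuple.sort (fun a => toLex (-lam a, a)), fun a b h => ?_⟩
  have h1 := Tuple.monotone_sort (fun a => toLex (-lam a, a)) h.le
  set v := Tuple.sort (fun a => toLex (-lam a, a))
  simp only [Function.comp, Prod.Lex.toLex_le_toLex] at h1
  have : v a ≠ v b := fun e => ne_of_lt h (v.injective e)
  rcases h1 with h1 | h1
  · left; omega
  · right; exact ⟨by omega, lt_of_le_of_ne h1.2 this⟩

theorem rk_inv {n : ℕ} (v : Equiv.Perm (Fin n)) (j k : ℕ) :
    rk v⁻¹ j k = psum (fun a => if (v a : ℕ) < k then 1 else 0) j := by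
  rw [psum_eq]
  unfold rk
  rw [← Equiv.sum_comp v]
  refine sum_congr rfl fun a _ => ?_
  have e : v⁻¹ (v a) = a := by simp
  rw [e]
  split_ifs <;> first | rfl | omega

theorem stmt15 (n : ℕ) (hn : 2 ≤ n) (μ : Fin n → ℤ) (hμ : Antitone μ)
    (w : Equiv.Perm (Fin n)) (lam : Fin n → ℤ) (hperm : Permissible μ w lam) :
    (∑ p ∈ Finset.univ.filter (fun p : Fin n × Fin n => p.1 < p.2), |ellF w lam p.1 p.2|) ≤
      (∑ p ∈ Finset.univ.filter (fun p : Fin n × Fin n => p.1 < p.2), (μ p.1 - μ p.2)) -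
        (reflLength w : ℤ) := by
  obtain ⟨v, hv⟩ := exists_sort_s15 lam
  rw [pair_sum (fun a b => |ellF w lam a b|), pair_sum (fun a b => μ a - μ b), sum_diff,
    sym_sum_perm (fun a b => |ellF w lam a b|) (fun a b => by rw [ellF_neg, abs_neg])
      (fun a => by simp [ellF]) v]
  have h1 : (∑ a, ∑ b, if a < b then |ellF w lam (v a) (v b)| else 0) =
      (∑ a, ∑ b, if a < b then lam (v a) - lam (v b) else 0) + invN (w * v) - invN v := by
    unfold invN
    simp only [← sum_add_distrib, ← sum_sub_distrib]
    refine sum_congr rfl fun a _ => sum_congr rfl fun b _ => ?_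
    by_cases hab : a < b
    · have h2 := hv a b hab
      have h3 : w (v a) ≠ w (v b) := fun e => ne_of_lt hab (v.injective (w.injective e))
      simp only [hab, if_true, true_and, Equiv.Perm.mul_apply]
      have h4 : ellF w lam (v a) (v b) = lam (v a) - lam (v b) +
          (if w (v b) < w (v a) then 1 else 0) - (if v b < v a then 1 else 0) := by
        have h5 : v a ≠ v b := fun e => ne_of_lt hab (v.injective e)
        unfold ellF
        split_ifs <;> omega
      rw [← h4, abs_of_nonneg]
      rw [h4]
      split_ifs <;> omega
    · simp [hab]
  rw [h1, sum_diff (fun a => lam (v a)), Equiv.sum_comp v lam, hperm.1]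
  have h2 := key_ineq (n := n) (fun j => psum μ j - psum (fun a => lam (v a)) j)
    (invN v⁻¹).toNat v⁻¹ (w * v)⁻¹ (Int.self_le_toNat _) (by
      have hmain : ∀ j k, 1 ≤ k → k ≤ n → rk v⁻¹ j k - rk (w * v)⁻¹ j k ≤
          psum μ j - psum (fun a => lam (v a)) j := by
        intro j k h1k hk
        have := perm_bound μ w lam hperm v k j h1k hk
        have e : psum (fun a => muI w lam k (v a)) j = psum (fun a => lam (v a)) j +
            rk v⁻¹ j k - rk (w * v)⁻¹ j k := by
          rw [rk_inv, rk_inv]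
          unfold psum
          rw [← sum_add_distrib, ← sum_sub_distrib]
          rfl
        linarith
      intro j k hk
      rcases Nat.eq_zero_or_pos k with h0 | h0
      · have := hmain j n (by omega) le_rfl
        subst h0
        have e : ∀ p : Equiv.Perm (Fin n), rk p j 0 = 0 := fun p => by simp [rk]
        have e2 : rk v⁻¹ j n = rk (w * v)⁻¹ j n := by rw [rk_inv, rk_inv]; simp
        rw [e, e]
        rw [e2] at this
        linarith
      · exact hmain j k h0 hk)
  rw [inv_inv, invN_inv, invN_inv, sum_sub_distrib] at h2
  have e : w * v * v⁻¹ = w := by group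
  rw [e] at h2
  linarith
end
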